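/- arXiv:2108.13483 — 5 statements merged into one kernel-verified Lean document; each statement's English description precedes it below -/
import Mathlib

section
/- For every permutation σ of {1,…,n} the following are equivalent: (a) A_{σ(i)σ(j)} = A_{ij} for all i, j ∈ {1,…,n}; (b) there exists an invertible linear map T : ℝ^d → ℝ^d with T(P) = P and T v_i = v_{σ(i)} for all i ∈ {1,…,n}. -/
/-!
Write `G = ΦΦᵀ`, which is positive definite because the vertices span `ℝ^d`, and let
`Ψ` be `Φ` with its columns permuted by `σ`. Permuting columns does not change the Gram
matrix of the rows, so `ΨΨᵀ = G`, and `(A (σ i) (σ j))ᵢⱼ = ΨᵀG⁻¹Ψ`.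

A linear map with matrix `M` sends `v i` to `v (σ i)` exactly when `MΦ = Ψ`; then
`M G Mᵀ = ΨΨᵀ = G`, so `M` is automatically invertible and `Mᵀ G⁻¹ M = G⁻¹`, which gives
`ΨᵀG⁻¹Ψ = ΦᵀG⁻¹Φ = A`. Conversely, if `A` is invariant under `σ`, then `M = ΨΦᵀG⁻¹` works:
`MΦ = ΨA`, and since `ΦA = Φ` the invariance of `A` yields `ΨA = Ψ`. Such a map permutes
the vertices, hence preserves their convex hull `P`.
-/

open Matrix

/-- The Gram matrix `ΦΦᵀ` is invertible when the convex hull of the columns of `Φ` is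
full-dimensional: a vector in its kernel is orthogonal to all columns, and these span. -/
lemma isUnit_det_gram {d n : ℕ} (v : Fin n → EuclideanSpace ℝ (Fin d))
    (hfull : affineSpan ℝ (convexHull ℝ (Set.range v)) = ⊤)
    (Φ : Matrix (Fin d) (Fin n) ℝ) (hΦ : ∀ k j, Φ k j = v j k) :
    IsUnit (Φ * Φᵀ).det := by
  have hspan : Submodule.span ℝ (Set.range v) = ⊤ := by
    have h1 : affineSpan ℝ (Set.range v) ≤
        (Submodule.span ℝ (Set.range v)).toAffineSubspace :=
      affineSpan_le.2 Submodule.subset_span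
    rw [affineSpan_convexHull] at hfull
    rw [hfull] at h1
    exact eq_top_iff.2 fun x _ => h1 (AffineSubspace.mem_top ℝ _ x)
  have hinj : Function.Injective Φ.vecMul := by
    refine (injective_iff_map_eq_zero (Matrix.vecMulLinear Φ)).2 fun w hw => ?_
    have hw' : ∀ j, inner ℝ (v j) (WithLp.toLp 2 w) = 0 := fun j => by
      have := congrFun hw j
      simpa [Matrix.vecMul, dotProduct, PiLp.inner_apply, hΦ] using this
    have hz : inner ℝ (WithLp.toLp 2 w) (WithLp.toLp 2 w : EuclideanSpace ℝ (Fin d)) = 0 := by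
      have hmem : (WithLp.toLp 2 w : EuclideanSpace ℝ (Fin d)) ∈
          Submodule.span ℝ (Set.range v) := hspan ▸ Submodule.mem_top
      refine Submodule.span_induction (p := fun x _ => inner ℝ x (WithLp.toLp 2 w) = 0)
        ?_ ?_ ?_ ?_ hmem
      · rintro _ ⟨j, rfl⟩
        exact hw' j
      · exact inner_zero_left _
      · intro x y _ _ hx hy
        rw [inner_add_left, hx, hy, add_zero]
      · intro a x _ hx
        rw [real_inner_smul_left, hx, mul_zero]
    exact congrArg WithLp.ofLp (inner_self_eq_zero.1 hz)
  have := (Matrix.PosDef.mul_conjTranspose_self Φ hinj).det_pos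
  rw [Matrix.conjTranspose_eq_transpose_of_trivial] at this
  exact this.ne'.isUnit

lemma submatrix_mul_transpose {d n : ℕ} (Φ : Matrix (Fin d) (Fin n) ℝ)
    (σ : Equiv.Perm (Fin n)) :
    Φ.submatrix id σ * (Φ.submatrix id σ)ᵀ = Φ * Φᵀ := by
  rw [Matrix.transpose_submatrix, Matrix.submatrix_mul_equiv, Matrix.submatrix_id_id]

/-- A matrix `M` with `MΦ = Ψ` preserves the form `G = ΦΦᵀ = ΨΨᵀ`. -/
lemma mul_gram_mul_transpose {d n : ℕ} {Φ : Matrix (Fin d) (Fin n) ℝ}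
    {σ : Equiv.Perm (Fin n)} {M : Matrix (Fin d) (Fin d) ℝ}
    (hM : M * Φ = Φ.submatrix id σ) : M * (Φ * Φᵀ) * Mᵀ = Φ * Φᵀ := by
  calc M * (Φ * Φᵀ) * Mᵀ = (M * Φ) * (M * Φ)ᵀ := by
        simp only [Matrix.transpose_mul, Matrix.mul_assoc]
    _ = Φ * Φᵀ := by rw [hM, submatrix_mul_transpose]

lemma isUnit_det_of_mul_eq {d n : ℕ} {Φ : Matrix (Fin d) (Fin n) ℝ}
    (hG : IsUnit (Φ * Φᵀ).det) {σ : Equiv.Perm (Fin n)} {M : Matrix (Fin d) (Fin d) ℝ}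
    (hM : M * Φ = Φ.submatrix id σ) : IsUnit M.det := by
  have hdet := congrArg Matrix.det (mul_gram_mul_transpose hM)
  rw [Matrix.det_mul, Matrix.det_mul] at hdet
  rw [← hdet] at hG
  exact isUnit_of_mul_isUnit_left (isUnit_of_mul_isUnit_left hG)

/-- The matrix form of the equivalence: `A` is invariant under `σ` if and only if some
matrix permutes the columns of `Φ` by `σ`; such a matrix is necessarily invertible. -/
lemma submatrix_eq_iff {d n : ℕ} (Φ : Matrix (Fin d) (Fin n) ℝ)
    (hG : IsUnit (Φ * Φᵀ).det) (σ : Equiv.Perm (Fin n)) :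
    (Φᵀ * (Φ * Φᵀ)⁻¹ * Φ).submatrix σ σ = Φᵀ * (Φ * Φᵀ)⁻¹ * Φ ↔
      ∃ M : Matrix (Fin d) (Fin d) ℝ, M * Φ = Φ.submatrix id σ := by
  have hsub : (Φᵀ * (Φ * Φᵀ)⁻¹ * Φ).submatrix σ σ =
      (Φ.submatrix id σ)ᵀ * (Φ * Φᵀ)⁻¹ * Φ.submatrix id σ := by
    ext i j
    simp [Matrix.mul_apply]
  constructor
  · intro h
    have hΦA : Φ * (Φᵀ * (Φ * Φᵀ)⁻¹ * Φ) = Φ := by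
      rw [← Matrix.mul_assoc, ← Matrix.mul_assoc, Matrix.mul_nonsing_inv _ hG, Matrix.one_mul]
    have hM : Φ.submatrix id σ * Φᵀ * (Φ * Φᵀ)⁻¹ * Φ = Φ.submatrix id σ := by
      calc Φ.submatrix id σ * Φᵀ * (Φ * Φᵀ)⁻¹ * Φ
          = Φ.submatrix id σ * (Φᵀ * (Φ * Φᵀ)⁻¹ * Φ) := by simp only [Matrix.mul_assoc]
        _ = Φ.submatrix id σ * (Φᵀ * (Φ * Φᵀ)⁻¹ * Φ).submatrix σ σ := by rw [h]
        _ = Φ.submatrix id σ := by rw [Matrix.submatrix_mul_equiv, hΦA]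
    exact ⟨_, hM⟩
  · rintro ⟨M, hM⟩
    have hMu := isUnit_det_of_mul_eq hG hM
    have hinv : Mᵀ * (Φ * Φᵀ)⁻¹ * M = (Φ * Φᵀ)⁻¹ := by
      have hMt : IsUnit Mᵀ.det := by rwa [Matrix.det_transpose]
      conv_lhs => rw [← mul_gram_mul_transpose hM, Matrix.mul_inv_rev, Matrix.mul_inv_rev]
      rw [← Matrix.mul_assoc, Matrix.mul_nonsing_inv _ hMt, Matrix.one_mul, Matrix.mul_assoc,
        Matrix.nonsing_inv_mul _ hMu, Matrix.mul_one]
    rw [hsub, ← hM, Matrix.transpose_mul]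
    calc Φᵀ * Mᵀ * (Φ * Φᵀ)⁻¹ * (M * Φ) = Φᵀ * (Mᵀ * (Φ * Φᵀ)⁻¹ * M) * Φ := by
          simp only [Matrix.mul_assoc]
      _ = _ := by rw [hinv]

/-- Let `Φ` be the `d × n` matrix whose columns are the vertices of the
full-dimensional polytope `P` and `A := Φᵀ(ΦΦᵀ)⁻¹Φ` (i.e. `A = Φ⁺Φ`). A permutation `σ`
of the vertex indices satisfies `A (σ i) (σ j) = A i j` for all `i, j` if and only if it
is induced by a linear symmetry of `P`. -/
theorem stmt_2 {d n : ℕ}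
    (v : Fin n → EuclideanSpace ℝ (Fin d))
    (P : Set (EuclideanSpace ℝ (Fin d)))
    (hP : P = convexHull ℝ (Set.range v))
    (hfull : affineSpan ℝ P = ⊤)
    (hinj : Function.Injective v)
    (hvert : Set.range v = Set.extremePoints ℝ P)
    (Φ : Matrix (Fin d) (Fin n) ℝ)
    (hΦ : ∀ k j, Φ k j = v j k)
    (A : Matrix (Fin n) (Fin n) ℝ)
    (hA : A = Φᵀ * (Φ * Φᵀ)⁻¹ * Φ)
    (σ : Equiv.Perm (Fin n)) :
    (∀ i j, A (σ i) (σ j) = A i j) ↔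
    (∃ T : EuclideanSpace ℝ (Fin d) ≃ₗ[ℝ] EuclideanSpace ℝ (Fin d),
      ⇑T '' P = P ∧ ∀ i, T (v i) = v (σ i)) := by
  have hG := isUnit_det_gram v (hP ▸ hfull) Φ hΦ
  have hcol : ∀ M : Matrix (Fin d) (Fin d) ℝ,
      M * Φ = Φ.submatrix id σ ↔ ∀ i, Matrix.toEuclideanLin M (v i) = v (σ i) := by
    intro M
    constructor
    · intro h i
      ext k
      have := congrFun (congrFun h k) i
      simpa [Matrix.mul_apply, Matrix.mulVec, dotProduct, hΦ] using this
    · intro h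
      ext k i
      have := congrArg (fun x : EuclideanSpace ℝ (Fin d) => x k) (h i)
      simpa [Matrix.mul_apply, Matrix.mulVec, dotProduct, hΦ] using this
  have hinv : (∀ i j, A (σ i) (σ j) = A i j) ↔ A.submatrix σ σ = A :=
    ⟨fun h => Matrix.ext h, fun h i j => congrFun (congrFun h i) j⟩
  rw [hinv, hA, submatrix_eq_iff Φ hG σ]
  constructor
  · rintro ⟨M, hM⟩
    have hMu := isUnit_det_of_mul_eq hG hM
    have hT := (hcol M).1 hM
    have h1 : Matrix.toEuclideanLin M ∘ₗ Matrix.toEuclideanLin M⁻¹ = LinearMap.id := by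
      ext x k
      simp [Matrix.toLpLin_apply, Matrix.mulVec_mulVec, Matrix.mul_nonsing_inv _ hMu]
    have h2 : Matrix.toEuclideanLin M⁻¹ ∘ₗ Matrix.toEuclideanLin M = LinearMap.id := by
      ext x k
      simp [Matrix.toLpLin_apply, Matrix.mulVec_mulVec, Matrix.nonsing_inv_mul _ hMu]
    refine ⟨LinearEquiv.ofLinearMap _ _ h1 h2, ?_, hT⟩
    change Matrix.toEuclideanLin M '' P = P
    have hcomp : ⇑(Matrix.toEuclideanLin M) ∘ v = v ∘ σ := funext hT
    rw [hP, LinearMap.image_convexHull, ← Set.range_comp, hcomp, σ.surjective.range_comp]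
  · rintro ⟨T, -, hT⟩
    have hTM : Matrix.toEuclideanLin (Matrix.toEuclideanLin.symm T.toLinearMap) =
        T.toLinearMap := LinearEquiv.apply_symm_apply _ _
    refine ⟨Matrix.toEuclideanLin.symm T.toLinearMap, (hcol _).2 fun i => ?_⟩
    rw [hTM]
    exact hT i
end

section
/- Let A ∈ ℝ^{n×n} be a symmetric matrix with A_{ij} = 0 whenever i ≠ j and ij ∉ E, and suppose there exists λ ∈ ℝ such that U is exactly the λ-eigenspace of A, i.e. U = {u ∈ ℝ^n : Au = λu}. Then for every permutation σ of {1,…,n} satisfying A_{σ(i)σ(j)} = A_{ij} for all i, j ∈ {1,…,n}, there exists an invertible linear map T : ℝ^d → ℝ^d with T(P) = P and T v_i = v_{σ(i)} for all i ∈ {1,…,n}. -/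
/-!
A permutation `σ` preserving the entries of `A` commutes with `A`, so `u ↦ u ∘ σ` preserves every
eigenspace of `A` (`mulVec_comp_perm_eq_smul`), in particular the row space `U` of `Φ`. Applied to
the rows of `Φ`, this says that each coordinate of `v (σ i)` is a fixed linear functional of `v i`,
i.e. there is a linear map `T` with `T (v i) = v (σ i)` for all `i`. As `P` is full-dimensional, its
vertices span the space, so `T` is surjective, hence bijective; and `T` maps `P` to itself because
it permutes the points whose convex hull is `P`.
-/

open Matrix

/-- Eigenspaces of `A` are invariant under the permutations preserving the entries of `A`. -/
lemma mulVec_comp_perm_eq_smul {n : ℕ} {A : Matrix (Fin n) (Fin n) ℝ} {lam : ℝ}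
    {σ : Equiv.Perm (Fin n)} (hσ : ∀ i j, A (σ i) (σ j) = A i j) {u : Fin n → ℝ}
    (hu : A.mulVec u = lam • u) : A.mulVec (u ∘ σ) = lam • (u ∘ σ) := by
  ext i
  have h := congrFun hu (σ i)
  simp only [Matrix.mulVec, dotProduct, Pi.smul_apply, Function.comp_apply] at h ⊢
  rw [← Equiv.sum_comp σ] at h
  simpa only [hσ] using h

/-- the "linear algebra criterion". Let `A` be a symmetric `n × n`
matrix supported on the edge-graph of the full-dimensional polytope `P` (i.e. a colored
adjacency matrix), and suppose the row space `U` of the vertex matrix `Φ` is exactly an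
eigenspace of `A`. Then every permutation `σ` of the vertex indices preserving the
entries of `A` is induced by a linear symmetry of `P`. -/
theorem stmt_3 {d n : ℕ}
    (v : Fin n → EuclideanSpace ℝ (Fin d))
    (P : Set (EuclideanSpace ℝ (Fin d)))
    (hP : P = convexHull ℝ (Set.range v))
    (hfull : affineSpan ℝ P = ⊤)
    (hinj : Function.Injective v)
    (hvert : Set.range v = Set.extremePoints ℝ P)
    (Adj : Fin n → Fin n → Prop)
    (hAdj : ∀ i j, Adj i j ↔ i ≠ j ∧ IsExtreme ℝ P (segment ℝ (v i) (v j)))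
    (Φ : Matrix (Fin d) (Fin n) ℝ)
    (hΦ : ∀ k j, Φ k j = v j k)
    (U : Set (Fin n → ℝ))
    (hU : U = {u | ∃ y : Fin d → ℝ, u = Φᵀ.mulVec y})
    (A : Matrix (Fin n) (Fin n) ℝ)
    (hAsymm : Aᵀ = A)
    (hAsupp : ∀ i j, i ≠ j → ¬ Adj i j → A i j = 0)
    (lam : ℝ)
    (hEig : U = {u | A.mulVec u = lam • u}) :
    ∀ σ : Equiv.Perm (Fin n), (∀ i j, A (σ i) (σ j) = A i j) →
      ∃ T : EuclideanSpace ℝ (Fin d) ≃ₗ[ℝ] EuclideanSpace ℝ (Fin d),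
        ⇑T '' P = P ∧ ∀ i, T (v i) = v (σ i) := by
  intro σ hσ
  have hrow : ∀ k, ∃ y : Fin d → ℝ, (fun j => v (σ j) k) = Φᵀ.mulVec y := by
    intro k
    have hk : (fun j => v j k) ∈ U := by
      rw [hU]
      refine ⟨Pi.single k 1, ?_⟩
      ext j
      simp [hΦ]
    rw [hEig] at hk
    have h : (fun j => v (σ j) k) ∈ U := by
      rw [hEig]
      exact mulVec_comp_perm_eq_smul hσ hk
    rwa [hU] at h
  choose Y hY using hrow
  let T₀ : EuclideanSpace ℝ (Fin d) →ₗ[ℝ] EuclideanSpace ℝ (Fin d) :=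
    Matrix.toLpLin 2 2 (Matrix.of Y)
  have hT₀ : ∀ i, T₀ (v i) = v (σ i) := by
    intro i
    ext k
    have h := congrFun (hY k) i
    simp only [Matrix.mulVec, dotProduct, Matrix.transpose_apply, hΦ] at h
    rw [h]
    simp [T₀, Matrix.mulVec, dotProduct, mul_comm]
  have hspan : Submodule.span ℝ (Set.range v) = ⊤ := by
    rw [hP, affineSpan_convexHull] at hfull
    rw [eq_top_iff]
    intro x _
    have hx : x ∈ affineSpan ℝ (Set.range v) := by
      rw [hfull]
      exact AffineSubspace.mem_top ℝ _ x
    exact affineSpan_subset_span hx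
  have hsurj : Function.Surjective T₀ := by
    rw [← LinearMap.range_eq_top, eq_top_iff, ← hspan, Submodule.span_le]
    rintro _ ⟨i, rfl⟩
    exact ⟨v (σ.symm i), by rw [hT₀, σ.apply_symm_apply]⟩
  refine ⟨LinearEquiv.ofBijective T₀ ⟨LinearMap.injective_iff_surjective.mpr hsurj, hsurj⟩,
    ?_, hT₀⟩
  change T₀ '' P = P
  rw [hP, T₀.image_convexHull, ← Set.range_comp]
  have hcomp : T₀ ∘ v = v ∘ σ := funext hT₀
  rw [hcomp, σ.surjective.range_comp]
end

section
/- The function f(c) = vol(P°(c)) is twice continuously differentiable on a neighborhood of the point (1,…,1) ∈ ℝ^n, and the Izmestiev matrix M satisfies M_{ij} = 0 for all i ≠ j with ij ∉ E. -/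
/-!
For functionals `ℓ k` on a finite-dimensional space, consider the volume of
`{x | ℓ k x ≤ b k, k ∈ S}` as a function of `b`, the polyhedra being bounded. Two facts suffice.

* The volume is continuous at `b` as soon as no constraint has the form `0 ≤ 0`, by dominated
  convergence (`continuousAt_vol`).
* By Fubini along the level sets of `ℓ j`, its partial derivative in `b j` is the volume of the facet
  `ℓ j = b j`, which is again a volume of the same kind, on `ker (ℓ j)`, with the constraint `j`
  removed and the right-hand sides changed linearly (`hasLineDerivAt_vol`). Hence the volume is
  `C^(n+1)` if the facet volumes are `C^n` (`contDiffAt_vol_succ`).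

Slicing twice, `f` is `C²` near `(1,…,1)` once the codimension-two volumes are continuous, and a
constraint `k` degenerating to `0 ≤ 0` there would put `v k` on the line through `v i` and `v j`,
which is impossible for vertices (`shift_shift_ne_zero`).

For `i ≠ j` the entry `M i j` is the volume of the intersection of the facets `i` and `j` of the dual
body, for a suitable Haar measure, or zero. If it does not vanish, that intersection contains a point
`x` where all other constraints are strict (`exists_strict`), and `⟪x, ·⟫` exposes the segment
`[v i, v j]` as a face of `P` (`isExtreme_segment`), so `i` and `j` are adjacent.
-/

open MeasureTheory
open scoped RealInnerProductSpace

set_option linter.unusedSectionVars false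

open Filter Topology

namespace PolyVol

/-! ### Differentiability from continuous partial derivatives -/

/-- A function on `ι → ℝ` whose partial derivatives exist near `b` and are continuous at `b` is
differentiable at `b`: change the coordinates one at a time, using the mean value inequality. -/
theorem hasFDerivAt_of_partials {ι : Type*} [Fintype ι] [DecidableEq ι]
    {f : (ι → ℝ) → ℝ} {D : ι → (ι → ℝ) → ℝ} {b : ι → ℝ}
    (hf : ∀ᶠ x in 𝓝 b, ∀ j, HasLineDerivAt ℝ f (D j x) x (Pi.single j 1))
    (hD : ∀ j, ContinuousAt (D j) b) :
    HasFDerivAt f (∑ j, D j b • ContinuousLinearMap.proj (R := ℝ) (φ := fun _ : ι => ℝ) j) b := by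
  rw [hasFDerivAt_iff_isLittleO_nhds_zero]
  have key : ∀ T : Finset ι,
      (fun h : ι → ℝ => f (b + ∑ j ∈ T, h j • Pi.single j (1 : ℝ)) - f b - ∑ j ∈ T, D j b * h j)
        =o[𝓝 0] (fun h => h) := by
    intro T
    induction T using Finset.induction_on with
    | empty => simp
    | insert j T hj ih =>
      have ht : Tendsto (fun p : (ι → ℝ) × ℝ =>
          b + ∑ k ∈ T, p.1 k • Pi.single k (1 : ℝ) + p.2 • Pi.single j (1 : ℝ))
          (𝓝 0 ×ˢ 𝓝 0) (𝓝 b) := by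
        rw [← nhds_prod_eq]
        have : Continuous (fun p : (ι → ℝ) × ℝ =>
          b + ∑ k ∈ T, p.1 k • Pi.single k (1 : ℝ) + p.2 • (Pi.single j (1 : ℝ) : ι → ℝ)) := by
          fun_prop
        convert this.tendsto (0, 0) using 2
        simp
      have h1 : (fun h : ι → ℝ => f (b + ∑ k ∈ T, h k • Pi.single k (1 : ℝ) +
            h j • Pi.single j (1 : ℝ)) - f (b + ∑ k ∈ T, h k • Pi.single k (1 : ℝ))
            - D j b * h j) =o[𝓝 0] (fun h => h j) := by
        rw [Asymptotics.isLittleO_iff]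
        intro ε hε
        have hD' : ∀ᶠ x in 𝓝 b, ‖D j x - D j b‖ ≤ ε := by
          filter_upwards [Metric.continuousAt_iff'.1 (hD j) ε hε] with x hx
          exact (dist_eq_norm (D j x) (D j b) ▸ hx).le
        obtain ⟨pa, hpa, pb, hpb, hp⟩ :=
          Filter.eventually_prod_iff.1 (ht.eventually (hf.and hD'))
        obtain ⟨r, hr, hball⟩ := Metric.eventually_nhds_iff_ball.1 hpb
        have hj0 : Tendsto (fun h : ι → ℝ => h j) (𝓝 0) (𝓝 0) :=
          (continuous_apply j).tendsto (0 : ι → ℝ)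
        filter_upwards [hpa, hj0.eventually (Metric.ball_mem_nhds 0 hr)] with h hh hhj
        have hder : ∀ s ∈ Metric.ball (0 : ℝ) r, HasDerivWithinAt
            (fun s => f (b + ∑ k ∈ T, h k • Pi.single k (1 : ℝ) + s • Pi.single j (1 : ℝ))
              - D j b * s)
            (D j (b + ∑ k ∈ T, h k • Pi.single k (1 : ℝ) + s • Pi.single j (1 : ℝ)) - D j b)
            (Metric.ball (0 : ℝ) r) s := by
          intro s hs
          have h2 := (hp hh (hball s hs)).1 j
          rw [HasLineDerivAt] at h2
          have h3 : HasDerivAt (fun t => t - s) 1 s := (hasDerivAt_id _).sub_const _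
          have h4 := HasDerivAt.comp_of_eq s h2 h3 (by simp)
          rw [mul_one] at h4
          refine HasDerivAt.hasDerivWithinAt (HasDerivAt.sub ?_ (by
            simpa using (hasDerivAt_id s).const_mul (D j b)))
          refine h4.congr_of_eventuallyEq (Eventually.of_forall fun t => ?_)
          simp only [Function.comp]
          congr 1
          module
        have h7 := Convex.norm_image_sub_le_of_norm_hasDerivWithin_le hder
          (fun s hs => (hp hh (hball s hs)).2) (convex_ball _ _) (Metric.mem_ball_self hr) hhj
        refine le_of_eq_of_le ?_ (h7.trans_eq ?_)
        · congr 1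
          simp
          ring
        · simp
      have h6 : (fun h : ι → ℝ => h j) =O[𝓝 0] (fun h => h) :=
        Asymptotics.isBigO_of_le _ fun h => norm_le_pi_norm h j
      refine ((h1.trans_isBigO h6).add ih).congr_left fun h => ?_
      rw [Finset.sum_insert hj, Finset.sum_insert hj]
      have e : b + (h j • Pi.single j (1 : ℝ) + ∑ k ∈ T, h k • Pi.single k (1 : ℝ)) =
        b + ∑ k ∈ T, h k • Pi.single k (1 : ℝ) + h j • Pi.single j (1 : ℝ) := by abel
      rw [e]
      ring
  refine (key Finset.univ).congr_left fun h => ?_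
  have e : ∑ j, h j • Pi.single j (1 : ℝ) = h := by
    ext k
    simp [Finset.sum_apply, Pi.single_apply]
  rw [e]
  simp

/-! ### Polyhedra with variable right-hand sides -/

variable {ι : Type*}

section
variable {E : Type} [NormedAddCommGroup E] [NormedSpace ℝ E]

/-- The polyhedron `{x | ℓ k x ≤ b k for all k ∈ S}`. -/
def poly (ℓ : ι → E →L[ℝ] ℝ) (S : Finset ι) (b : ι → ℝ) : Set E := {x | ∀ k ∈ S, ℓ k x ≤ b k}

/-- The polyhedra `poly ℓ S b` have trivial recession cone, equivalently all of them are bounded.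
This does not depend on `b` and passes to the slices along `ker (ℓ j)`. -/
def Pointed (ℓ : ι → E →L[ℝ] ℝ) (S : Finset ι) : Prop := ∀ x, (∀ k ∈ S, ℓ k x ≤ 0) → x = 0

/-- The functionals `ℓ k` restricted to the hyperplane `ker (ℓ j)`. -/
def res (ℓ : ι → E →L[ℝ] ℝ) (j : ι) (k : ι) : (ℓ j).ker →L[ℝ] ℝ := (ℓ k).comp (ℓ j).ker.subtypeL

/-- The right-hand sides describing the facet `ℓ j = b j` of `poly ℓ S b`, after translation by
`-b j • u` into `ker (ℓ j)`, where `ℓ j u = 1`. -/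
def shift (ℓ : ι → E →L[ℝ] ℝ) (j : ι) (u : E) (b : ι → ℝ) : ι → ℝ := fun k => b k - b j * ℓ k u

theorem isClosed_poly (ℓ : ι → E →L[ℝ] ℝ) (S : Finset ι) (b : ι → ℝ) : IsClosed (poly ℓ S b) := by
  have : poly ℓ S b = ⋂ k ∈ S, {x | ℓ k x ≤ b k} := by ext; simp [poly]
  rw [this]
  exact isClosed_biInter fun k _ => isClosed_le (ℓ k).continuous continuous_const

theorem Pointed.res [DecidableEq ι] {ℓ : ι → E →L[ℝ] ℝ} {S : Finset ι} (h : Pointed ℓ S) (j : ι) :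
    Pointed (res ℓ j) (S.erase j) := by
  intro y hy
  refine Subtype.ext (h y fun k hk => ?_)
  by_cases hkj : k = j
  · subst hkj
    exact (LinearMap.mem_ker.1 y.2).le
  · exact hy k (Finset.mem_erase.2 ⟨hkj, hk⟩)

variable [FiniteDimensional ℝ E]

/-- The sum of the positive parts of the `ℓ k` is a positively homogeneous function with positive
minimum on the unit sphere. -/
theorem Pointed.bounded {ℓ : ι → E →L[ℝ] ℝ} {S : Finset ι} (h : Pointed ℓ S) :
    ∃ δ > 0, ∀ x, δ * ‖x‖ ≤ ∑ k ∈ S, max (ℓ k x) 0 := by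
  have hc : Continuous fun x => ∑ k ∈ S, max (ℓ k x) 0 := by fun_prop
  rcases subsingleton_or_nontrivial E with hE | hE
  · refine ⟨1, one_pos, fun x => ?_⟩
    rw [Subsingleton.elim x 0]
    simp
  have := FiniteDimensional.proper ℝ E
  obtain ⟨z, hz, hmin⟩ := (isCompact_sphere (0 : E) 1).exists_isMinOn
    (NormedSpace.sphere_nonempty.2 zero_le_one) hc.continuousOn
  have hnn : ∀ x, ∀ k ∈ S, 0 ≤ max (ℓ k x) 0 := fun x k _ => le_max_right _ _
  refine ⟨∑ k ∈ S, max (ℓ k z) 0, ?_, fun x => ?_⟩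
  · refine lt_of_le_of_ne (Finset.sum_nonneg (hnn z)) fun h0 => ?_
    have h1 := (Finset.sum_eq_zero_iff_of_nonneg (hnn z)).1 h0.symm
    have : z = 0 := h z fun k hk => (le_max_left _ _).trans (h1 k hk).le
    simp [this] at hz
  · rcases eq_or_ne x 0 with rfl | hx
    · simp
    have hx' : 0 < ‖x‖ := norm_pos_iff.2 hx
    have h2 : ‖x‖⁻¹ • x ∈ Metric.sphere (0 : E) 1 := by simp [norm_smul, hx]
    have h3 : ∑ k ∈ S, max (ℓ k z) 0 ≤ ∑ k ∈ S, max (ℓ k (‖x‖⁻¹ • x)) 0 := hmin h2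
    have h4 : ∀ k, max (ℓ k (‖x‖⁻¹ • x)) 0 = ‖x‖⁻¹ * max (ℓ k x) 0 := fun k => by
      rw [mul_max_of_nonneg _ _ (by positivity)]
      simp
    simp_rw [h4, ← Finset.mul_sum] at h3
    rwa [inv_mul_eq_div, le_div_iff₀ hx'] at h3

theorem Pointed.eventually_subset [Fintype ι] {ℓ : ι → E →L[ℝ] ℝ} {S : Finset ι} (h : Pointed ℓ S)
    (b : ι → ℝ) : ∃ R, ∀ᶠ b' in 𝓝 b, poly ℓ S b' ⊆ Metric.closedBall 0 R := by
  obtain ⟨δ, hδ, hb⟩ := h.bounded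
  have hc : Continuous fun b' : ι → ℝ => ∑ k ∈ S, max (b' k) 0 := by fun_prop
  refine ⟨(∑ k ∈ S, max (b k) 0 + 1) / δ, ?_⟩
  filter_upwards [hc.continuousAt.eventually_lt_const (lt_add_one _)] with b' hb' x hx
  rw [mem_closedBall_zero_iff, le_div_iff₀' hδ]
  refine ((hb x).trans (Finset.sum_le_sum fun k hk => ?_)).trans hb'.le
  exact max_le_max_right _ (hx k hk)

variable [MeasurableSpace E] [BorelSpace E]

/-- The volume `μ (poly ℓ S b)` as a real number; the junk value at `∞` never occurs for pointed
systems. -/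
noncomputable def vol (μ : Measure E) (ℓ : ι → E →L[ℝ] ℝ) (S : Finset ι) (b : ι → ℝ) : ℝ :=
  (μ (poly ℓ S b)).toReal

theorem Pointed.measure_lt_top [Fintype ι] {ℓ : ι → E →L[ℝ] ℝ} {S : Finset ι} (h : Pointed ℓ S)
    (μ : Measure E) [μ.IsAddHaarMeasure] (b : ι → ℝ) : μ (poly ℓ S b) < ⊤ := by
  obtain ⟨R, hR⟩ := h.eventually_subset b
  have := FiniteDimensional.proper ℝ E
  exact (measure_mono hR.self_of_nhds).trans_lt measure_closedBall_lt_top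

theorem ae_ne (μ : Measure E) [μ.IsAddHaarMeasure] {φ : E →L[ℝ] ℝ} (hφ : φ ≠ 0) (t : ℝ) :
    ∀ᵐ x ∂μ, φ x ≠ t := by
  by_cases hx : ∃ x₀, φ x₀ = t
  · obtain ⟨x₀, h0⟩ := hx
    have h1 : μ ((fun x => x - x₀) ⁻¹' (φ.ker : Set E)) = 0 := by
      simp_rw [sub_eq_add_neg]
      rw [measure_preimage_add_right]
      refine Measure.addHaar_submodule μ _ fun h => hφ ?_
      ext x
      exact LinearMap.mem_ker.1 (h ▸ Submodule.mem_top : x ∈ φ.ker)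
    refine measure_mono_null (fun x hx => ?_) h1
    simp at hx
    simp [hx, h0]
  · exact Eventually.of_forall fun x h => hx ⟨x, h⟩

theorem ae_apply_ne {ℓ : ι → E →L[ℝ] ℝ} {S : Finset ι} (μ : Measure E) [μ.IsAddHaarMeasure]
    {b : ι → ℝ} (hz : ∀ k ∈ S, ℓ k = 0 → b k ≠ 0) : ∀ᵐ x ∂μ, ∀ k ∈ S, ℓ k x ≠ b k := by
  refine (ae_ball_iff S.countable_toSet).2 ?_
  intro k hk
  by_cases hk0 : ℓ k = 0
  · refine Eventually.of_forall fun x => ?_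
    simpa [hk0] using (hz k hk hk0).symm
  · exact ae_ne μ hk0 _

/-- The volume is continuous at `b` unless a constraint reads `0 ≤ 0`: off the null set of the
hyperplanes `ℓ k = b k`, membership of a point in the polyhedron is locally constant in `b`. -/
theorem continuousAt_vol [Fintype ι] {ℓ : ι → E →L[ℝ] ℝ} {S : Finset ι} (h : Pointed ℓ S)
    (μ : Measure E) [μ.IsAddHaarMeasure] {b : ι → ℝ} (hz : ∀ k ∈ S, ℓ k = 0 → b k ≠ 0) :
    ContinuousAt (vol μ ℓ S) b := by
  obtain ⟨R, hR⟩ := h.eventually_subset b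
  have := FiniteDimensional.proper ℝ E
  refine (ENNReal.tendsto_toReal (h.measure_lt_top μ b).ne).comp ?_
  refine tendsto_measure_of_ae_tendsto_indicator (𝓝 b) (isClosed_poly ℓ S b).measurableSet
    (fun b' => (isClosed_poly ℓ S b').measurableSet) (B := Metric.closedBall 0 R)
    measurableSet_closedBall measure_closedBall_lt_top.ne hR ?_
  filter_upwards [ae_apply_ne μ hz] with x hx
  by_cases hxp : x ∈ poly ℓ S b
  · have : ∀ᶠ b' in 𝓝 b, ∀ k ∈ S, ℓ k x < b' k := by
      rw [Filter.eventually_all_finset]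
      exact fun k hk => (continuous_apply k).continuousAt.eventually_const_lt
        (lt_of_le_of_ne (hxp k hk) (hx k hk))
    filter_upwards [this] with b' hb'
    simp only [hxp, iff_true]
    exact fun k hk => (hb' k hk).le
  · obtain ⟨k, hk, hlt⟩ : ∃ k ∈ S, b k < ℓ k x := by simpa [poly] using hxp
    filter_upwards [(continuous_apply k).continuousAt.eventually_lt_const hlt] with b' hb'
    simp only [hxp, iff_false]
    exact fun hc => (hc k hk).not_gt hb'

theorem contDiffAt_zero_vol [Fintype ι] {ℓ : ι → E →L[ℝ] ℝ} {S : Finset ι} (h : Pointed ℓ S)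
    (μ : Measure E) [μ.IsAddHaarMeasure] {b : ι → ℝ} (hz : ∀ k ∈ S, ℓ k = 0 → b k ≠ 0) :
    ContDiffAt ℝ 0 (vol μ ℓ S) b := by
  rw [contDiffAt_zero]
  refine ⟨{b' | ∀ k ∈ S, ℓ k = 0 → b' k ≠ 0}, ?_, fun b' hb' =>
    (continuousAt_vol h μ hb').continuousWithinAt⟩
  refine (Filter.eventually_all_finset S).2 fun k hk => ?_
  by_cases hk0 : ℓ k = 0
  · filter_upwards [(continuous_apply k).continuousAt.eventually_ne (hz k hk hk0)] with b' hb' _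
    exact hb'
  · exact Eventually.of_forall fun b' h => absurd h hk0

/-! ### Slicing and derivatives of the volume -/

/-- `ν` is a Haar measure on `ker φ`, and if `φ ≠ 0` then `φ u = 1` and `μ` is the product of
Lebesgue measure and `ν` under the identification `(s, y) ↦ s • u + y` of `ℝ × ker φ` with `E`. -/
structure IsSlice (μ : Measure E) (φ : E →L[ℝ] ℝ) (u : E) (ν : Measure φ.ker) : Prop where
  haar : ν.IsAddHaarMeasure
  apply_eq_one : φ ≠ 0 → φ u = 1
  measurable : φ ≠ 0 → ∀ A : Set E, MeasurableSet A →
    Measurable (fun s : ℝ => ν {y | s • u + (y : E) ∈ A})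
  lintegral : φ ≠ 0 → ∀ A : Set E, MeasurableSet A →
    μ A = ∫⁻ s : ℝ, ν {y | s • u + (y : E) ∈ A}

theorem exists_isSlice (μ : Measure E) [μ.IsAddHaarMeasure] (φ : E →L[ℝ] ℝ) :
    ∃ (u : E) (ν : Measure φ.ker), IsSlice μ φ u ν := by
  suffices ∃ (u : E) (ν : Measure φ.ker), ν.IsAddHaarMeasure ∧ (φ ≠ 0 → φ u = 1 ∧
      ∀ A : Set E, MeasurableSet A →
        Measurable (fun s : ℝ => ν {y | s • u + (y : E) ∈ A}) ∧
        μ A = ∫⁻ s : ℝ, ν {y | s • u + (y : E) ∈ A}) by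
    obtain ⟨u, ν, h1, h2⟩ := this
    exact ⟨u, ν, h1, fun h => (h2 h).1, fun h A hA => ((h2 h).2 A hA).1,
      fun h A hA => ((h2 h).2 A hA).2⟩
  by_cases hφ : φ = 0
  · exact ⟨0, Measure.addHaar, inferInstance, fun h => absurd hφ h⟩
  obtain ⟨x, hx⟩ : ∃ x, φ x ≠ 0 := by
    by_contra! h
    exact hφ (by ext x; simpa using h x)
  set u : E := (φ x)⁻¹ • x with hu
  have hu1 : φ u = 1 := by simp [hu, hx]
  let e : (ℝ × φ.ker) ≃L[ℝ] E := LinearEquiv.toContinuousLinearEquiv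
    { toFun := fun p => p.1 • u + (p.2 : E)
      map_add' := fun p q => by simp; module
      map_smul' := fun c p => by simp; module
      invFun := fun x => (φ x, ⟨x - φ x • u, by simp [hu1]⟩)
      left_inv := fun p => by
        have : φ p.2 = 0 := LinearMap.mem_ker.1 p.2.2
        ext <;> simp [hu1, this]
      right_inv := fun x => by simp }
  have he : ∀ p, e p = p.1 • u + (p.2 : E) := fun p => rfl
  obtain ⟨c, hc0, hc⟩ : ∃ c : NNReal, c ≠ 0 ∧ μ.map e.symm =
      c • ((volume : Measure ℝ).prod (Measure.addHaar : Measure φ.ker)) := by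
    have := Measure.isAddLeftInvariant_eq_smul (μ.map e.symm)
      ((volume : Measure ℝ).prod (Measure.addHaar : Measure φ.ker))
    refine ⟨_, ?_, this⟩
    exact (Measure.addHaarScalarFactor_pos_of_isAddHaarMeasure _ _).ne'
  refine ⟨u, c • Measure.addHaar, ?_, fun _ => ⟨hu1, fun A hA => ?_⟩⟩
  · exact Measure.IsAddHaarMeasure.nnreal_smul _ hc0
  · have hm : MeasurableSet (e ⁻¹' A) := e.continuous.measurable hA
    generalize hν : c • (Measure.addHaar : Measure φ.ker) = ν
    have : SFinite ν := by rw [← hν]; infer_instance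
    refine ⟨measurable_measure_prodMk_left (ν := ν) hm, ?_⟩
    have h1 : μ A = (μ.map e.symm) (e ⁻¹' A) := by
      rw [Measure.map_apply e.symm.continuous.measurable hm]
      congr 1
      ext; simp
    rw [h1, hc, ← Measure.prod_smul_right, hν, Measure.prod_apply hm]
    rfl

/-- Pushing the `j`-th facet outwards changes the volume at the rate of the facet's volume: slice
by the level sets of `ℓ j` and apply the fundamental theorem of calculus. -/
theorem hasLineDerivAt_vol [Fintype ι] [DecidableEq ι] {ℓ : ι → E →L[ℝ] ℝ} {S : Finset ι}
    (h : Pointed ℓ S) {μ : Measure E} [μ.IsAddHaarMeasure] {j : ι} (hj : j ∈ S) (hℓ : ℓ j ≠ 0)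
    {u : E} {ν : Measure (ℓ j).ker} (hs : IsSlice μ (ℓ j) u ν) {b : ι → ℝ}
    (hc : ContinuousAt (vol ν (res ℓ j) (S.erase j)) (shift ℓ j u b)) :
    HasLineDerivAt ℝ (vol μ ℓ S) (vol ν (res ℓ j) (S.erase j) (shift ℓ j u b)) b
      (Pi.single j 1) := by
  have := hs.haar
  have hu := hs.apply_eq_one hℓ
  set B : ℝ → ι → ℝ := fun s k => b k - s * ℓ k u with hB
  set G : ℝ → ENNReal := fun s => ν (poly (res ℓ j) (S.erase j) (B s)) with hG
  set g : ℝ → ℝ := fun s => vol ν (res ℓ j) (S.erase j) (B s) with hg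
  have hGtop : ∀ s, G s < ⊤ := fun s => (h.res j).measure_lt_top ν _
  have hset : ∀ s, {y : (ℓ j).ker | s • u + (y : E) ∈ poly ℓ (S.erase j) b} =
      poly (res ℓ j) (S.erase j) (B s) := by
    intro s
    ext y
    simp [poly, res, hB, le_sub_iff_add_le']
  have hGm : Measurable G := by
    have := hs.measurable hℓ _ (isClosed_poly ℓ (S.erase j) b).measurableSet
    simpa only [hset] using this
  have hset' : ∀ s t, {y : (ℓ j).ker | s • u + (y : E) ∈ poly ℓ S (b + t • Pi.single j 1)} =
      if s ≤ b j + t then poly (res ℓ j) (S.erase j) (B s) else ∅ := by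
    intro s t
    rw [← hset]
    have hy : ∀ y : (ℓ j).ker, ℓ j y = 0 := fun y => LinearMap.mem_ker.1 y.2
    have hi : ∀ y : (ℓ j).ker, s • u + (y : E) ∈ poly ℓ S (b + t • Pi.single j 1) ↔
        s ≤ b j + t ∧ s • u + (y : E) ∈ poly ℓ (S.erase j) b := by
      intro y
      constructor
      · intro H
        refine ⟨by simpa [hu, hy] using H j hj, fun k hk => ?_⟩
        simpa [(Finset.mem_erase.1 hk).1] using H k (Finset.mem_erase.1 hk).2
      · rintro ⟨H1, H2⟩ k hk
        by_cases hkj : k = j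
        · subst hkj
          simpa [hu, hy] using H1
        · simpa [hkj] using H2 k (Finset.mem_erase.2 ⟨hkj, hk⟩)
    ext y
    rw [Set.mem_ofPred_eq, hi]
    split_ifs with hst <;> simp [hst]
  have hμ : ∀ t, μ (poly ℓ S (b + t • Pi.single j 1)) = ∫⁻ s in Set.Iic (b j + t), G s := by
    intro t
    rw [hs.lintegral hℓ _ (isClosed_poly _ _ _).measurableSet,
      ← lintegral_indicator measurableSet_Iic]
    refine lintegral_congr fun s => ?_
    rw [hset']
    by_cases hst : s ≤ b j + t <;> simp [hst, hG]
  have hgInt : ∀ t, IntegrableOn g (Set.Iic (b j + t)) := fun t =>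
    integrable_toReal_of_lintegral_ne_top hGm.aemeasurable
      (by rw [← hμ]; exact (h.measure_lt_top μ _).ne)
  have hvol : ∀ t, vol μ ℓ S (b + t • Pi.single j 1) = ∫ s in Set.Iic (b j + t), g s := by
    intro t
    rw [vol, hμ, ← integral_toReal hGm.aemeasurable (Eventually.of_forall hGtop)]
    rfl
  have hgInt₀ : IntegrableOn g (Set.Iic (b j)) := by simpa using hgInt 0
  have hgc : ContinuousAt g (b j) := by
    have : ContinuousAt B (b j) := by
      have : Continuous B := by fun_prop
      exact this.continuousAt
    exact ContinuousAt.comp (g := vol ν (res ℓ j) (S.erase j)) (by exact hc) this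
  have hgm : StronglyMeasurable g := hGm.ennreal_toReal.stronglyMeasurable
  have hd := intervalIntegral.integral_hasDerivAt_right (a := b j) (b := b j) (f := g)
    (by simp) hgm.stronglyMeasurableAtFilter hgc
  have hd2 := HasDerivAt.comp_const_add (b j) (0 : ℝ) (by simpa using hd)
  rw [HasLineDerivAt]
  -- replace the integral over `Iic (b j + t)` by a constant plus an interval integral
  refine (hd2.const_add (∫ s in Set.Iic (b j), g s)).congr_of_eventuallyEq
    (Eventually.of_forall fun t => ?_)
  simp only [hvol]
  rw [← intervalIntegral.integral_Iic_sub_Iic hgInt₀ (hgInt t)]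
  ring

/-- The partial derivative of `vol μ ℓ S` in the direction `j`, when `u j` and `ν j` slice `μ` along
`ker (ℓ j)`. -/
noncomputable def partialVol [DecidableEq ι] (ℓ : ι → E →L[ℝ] ℝ) (S : Finset ι) (u : ι → E)
    (ν : ∀ j, Measure (ℓ j).ker) (j : ι) (b : ι → ℝ) : ℝ :=
  open Classical in
  if j ∈ S ∧ ℓ j ≠ 0 then vol (ν j) (res ℓ j) (S.erase j) (shift ℓ j (u j) b) else 0

theorem contDiff_shift [Fintype ι] (ℓ : ι → E →L[ℝ] ℝ) (j : ι) (u : E) {n : WithTop ℕ∞} :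
    ContDiff ℝ n (shift ℓ j u) := by
  rw [contDiff_pi]
  intro k
  unfold shift
  fun_prop

/-- A constraint that is absent, or that reads `0 ≤ b j` with `b₀ j ≠ 0`, does not affect the volume
when `b j` varies near `b₀`. -/
theorem hasLineDerivAt_vol_zero [Fintype ι] [DecidableEq ι] {ℓ : ι → E →L[ℝ] ℝ} {S : Finset ι}
    {μ : Measure E} {j : ι} {b₀ : ι → ℝ} (hj : ¬ (j ∈ S ∧ ℓ j ≠ 0))
    (hz : ∀ k ∈ S, ℓ k = 0 → b₀ k ≠ 0) :
    ∀ᶠ b in 𝓝 b₀, HasLineDerivAt ℝ (vol μ ℓ S) 0 b (Pi.single j 1) := by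
  have hQ : ∀ᶠ b in 𝓝 b₀, j ∈ S → (0 ≤ b j ↔ 0 ≤ b₀ j) := by
    by_cases hjS : j ∈ S
    · have h0 : ℓ j = 0 := by_contra fun h => hj ⟨hjS, h⟩
      have hc : ContinuousAt (fun b : ι → ℝ => b j) b₀ := (continuous_apply j).continuousAt
      rcases lt_or_gt_of_ne (hz j hjS h0) with h1 | h1
      · filter_upwards [hc.eventually_lt_const h1] with b hb _
        simp [hb.not_ge, h1.not_ge]
      · filter_upwards [hc.eventually_const_lt h1] with b hb _
        simp [hb.le, h1.le]
    · exact Eventually.of_forall fun b h => absurd h hjS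
  filter_upwards [hQ.eventually_nhds] with b hb
  have ht : Tendsto (fun t : ℝ => b + t • (Pi.single j 1 : ι → ℝ)) (𝓝 0) (𝓝 b) := by
    have : Continuous (fun t : ℝ => b + t • (Pi.single j 1 : ι → ℝ)) := by fun_prop
    simpa using this.tendsto 0
  rw [HasLineDerivAt]
  refine (hasDerivAt_const (0 : ℝ) (vol μ ℓ S b)).congr_of_eventuallyEq ?_
  filter_upwards [ht.eventually hb] with t hbt
  have : poly ℓ S (b + t • Pi.single j 1) = poly ℓ S b := by
    ext x
    refine forall₂_congr fun k hk => ?_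
    by_cases hkj : k = j
    · subst hkj
      have h0 : ℓ k = 0 := by_contra fun h => hj ⟨hk, h⟩
      simpa [h0] using (hbt hk).trans (hb.self_of_nhds hk).symm
    · simp [hkj]
  simp only [vol, this]

/-- One order of smoothness is gained in passing from the facet volumes to the volume. -/
theorem contDiffAt_vol_succ [Fintype ι] [DecidableEq ι] (n : ℕ) {ℓ : ι → E →L[ℝ] ℝ} {S : Finset ι}
    (h : Pointed ℓ S) {μ : Measure E} [μ.IsAddHaarMeasure] {b₀ : ι → ℝ}
    (hz : ∀ k ∈ S, ℓ k = 0 → b₀ k ≠ 0)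
    {u : ι → E} {ν : ∀ j, Measure (ℓ j).ker} (hs : ∀ j, IsSlice μ (ℓ j) (u j) (ν j))
    (hG : ∀ j ∈ S, ℓ j ≠ 0 →
      ContDiffAt ℝ n (vol (ν j) (res ℓ j) (S.erase j)) (shift ℓ j (u j) b₀)) :
    (∀ᶠ b in 𝓝 b₀, HasFDerivAt (vol μ ℓ S) (∑ j, partialVol ℓ S u ν j b •
      ContinuousLinearMap.proj (R := ℝ) (φ := fun _ : ι => ℝ) j) b) ∧
    ContDiffAt ℝ (n + 1) (vol μ ℓ S) b₀ := by
  have hD : ∀ j, ContDiffAt ℝ n (partialVol ℓ S u ν j) b₀ := by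
    intro j
    by_cases hj : j ∈ S ∧ ℓ j ≠ 0
    · simp only [funext fun b => show partialVol ℓ S u ν j b = _ from if_pos hj]
      exact (hG j hj.1 hj.2).comp b₀ (contDiff_shift ℓ j (u j)).contDiffAt
    · simp only [funext fun b => show partialVol ℓ S u ν j b = _ from if_neg hj]
      exact contDiffAt_const
  have hcont : ∀ {f : (ι → ℝ) → ℝ} {c : ι → ℝ}, ContDiffAt ℝ n f c →
      ∀ᶠ c' in 𝓝 c, ContinuousAt f c' := fun hf =>
    (hf.eventually (by simp)).mono fun _ h => h.continuousAt
  have hline : ∀ᶠ b in 𝓝 b₀, ∀ j,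
      HasLineDerivAt ℝ (vol μ ℓ S) (partialVol ℓ S u ν j b) b (Pi.single j 1) := by
    rw [Filter.eventually_all]
    intro j
    by_cases hj : j ∈ S ∧ ℓ j ≠ 0
    · have ht : Tendsto (shift ℓ j (u j)) (𝓝 b₀) (𝓝 (shift ℓ j (u j) b₀)) :=
        (contDiff_shift (n := 0) ℓ j (u j)).continuous.tendsto b₀
      filter_upwards [ht.eventually (hcont (hG j hj.1 hj.2))] with b hb
      rw [show partialVol ℓ S u ν j b = _ from if_pos hj]
      exact hasLineDerivAt_vol h hj.1 hj.2 (hs j) hb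
    · filter_upwards [hasLineDerivAt_vol_zero (μ := μ) hj hz] with b hb
      rwa [show partialVol ℓ S u ν j b = _ from if_neg hj]
  have hF : ∀ᶠ b in 𝓝 b₀, HasFDerivAt (vol μ ℓ S) (∑ j, partialVol ℓ S u ν j b •
      ContinuousLinearMap.proj (R := ℝ) (φ := fun _ : ι => ℝ) j) b := by
    filter_upwards [hline.eventually_nhds, Filter.eventually_all.2 fun j => hcont (hD j)]
      with b hb hb'
    exact hasFDerivAt_of_partials hb hb'
  refine ⟨hF, contDiffAt_succ_iff_hasFDerivAt.2 ⟨_, ⟨_, hF, fun _ h => h⟩, ?_⟩⟩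
  exact ContDiffAt.sum fun j _ => (hD j).smul contDiffAt_const

/-- A polyhedron of positive volume has a point at which every constraint is strict. -/
theorem exists_strict [Fintype ι] {ℓ : ι → E →L[ℝ] ℝ} {S : Finset ι} (μ : Measure E)
    [μ.IsAddHaarMeasure] {b : ι → ℝ} (hz : ∀ k ∈ S, ℓ k = 0 → b k ≠ 0) (hv : vol μ ℓ S b ≠ 0) :
    ∃ x, ∀ k ∈ S, ℓ k x < b k := by
  by_contra! hcon
  refine hv ?_
  have : μ (poly ℓ S b) = 0 := by
    refine measure_mono_null ?_ (ae_iff.1 (ae_apply_ne μ hz))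
    intro x hx
    obtain ⟨k, hk, hkx⟩ := hcon x
    simp only [Set.mem_ofPred_eq, not_forall]
    exact ⟨k, hk, fun h => h (le_antisymm (hx k hk) hkx)⟩
  simp [vol, this]

end

/-! ### The geometry of the vertices -/

section geometry
variable {V : Type} [NormedAddCommGroup V] [InnerProductSpace ℝ V]

/-- A linear functional with value `1` at two of the points and less than `1` at all others exposes
the segment between those two as a face of the convex hull. -/
theorem isExtreme_segment {v : ι → V} {i j : ι} {x : V} (hi : ⟪x, v i⟫ = 1) (hj : ⟪x, v j⟫ = 1)
    (hlt : ∀ k, k ≠ i → k ≠ j → ⟪x, v k⟫ < 1) :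
    IsExtreme ℝ (convexHull ℝ (Set.range v)) (segment ℝ (v i) (v j)) := by
  have hC : convexHull ℝ (Set.range v) ⊆
      {p | ⟪x, p⟫ ≤ 1 ∧ (⟪x, p⟫ = 1 → p ∈ segment ℝ (v i) (v j))} := by
    refine convexHull_min ?_ ?_
    · rintro _ ⟨k, rfl⟩
      by_cases hki : k = i
      · subst hki
        exact ⟨hi.le, fun _ => left_mem_segment ..⟩
      by_cases hkj : k = j
      · subst hkj
        exact ⟨hj.le, fun _ => right_mem_segment ..⟩
      exact ⟨(hlt k hki hkj).le, fun h => absurd h (hlt k hki hkj).ne⟩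
    · rintro p ⟨hp, hp'⟩ q ⟨hq, hq'⟩ a b ha hb hab
      simp only [Set.mem_ofPred_eq, inner_add_right, inner_smul_right]
      refine ⟨by nlinarith, fun h => ?_⟩
      rcases ha.eq_or_lt with rfl | ha
      · obtain rfl : b = 1 := by linarith
        simpa using hq' (by simpa using h)
      rcases hb.eq_or_lt with rfl | hb
      · obtain rfl : a = 1 := by linarith
        simpa using hp' (by simpa using h)
      exact convex_segment _ _ (hp' (by nlinarith)) (hq' (by nlinarith)) ha.le hb.le hab
  have hseg : ∀ z ∈ segment ℝ (v i) (v j), ⟪x, z⟫ = 1 := by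
    rintro z ⟨a, b, _, _, hab, rfl⟩
    simp [inner_add_right, inner_smul_right, hi, hj, hab]
  refine ⟨segment_subset_convexHull ⟨i, rfl⟩ ⟨j, rfl⟩, ?_⟩
  rintro p hp q hq z hz ⟨a, b, ha, hb, hab, rfl⟩
  have h1 := hseg _ hz
  simp only [inner_add_right, inner_smul_right] at h1
  have h2 := (hC hp).1
  have h3 := (hC hq).1
  exact (hC hp).2 (by nlinarith)

/-- No vertex lies on the line through two other points of the family. -/
theorem not_collinear {v : ι → V} (hinj : Function.Injective v)
    (hvert : Set.range v = Set.extremePoints ℝ (convexHull ℝ (Set.range v)))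
    {i j k : ι} (hki : k ≠ i) (hkj : k ≠ j) {α β : ℝ} (hαβ : α + β = 1)
    (h : v k = α • v i + β • v j) : False := by
  have hext : ∀ a b c : ι, ∀ s t : ℝ, a ≠ b → 0 < s → 0 < t → s + t = 1 →
      v a = s • v b + t • v c → False := by
    intro a b c s t hab hs ht hst H
    have h1 : v a ∈ Set.extremePoints ℝ (convexHull ℝ (Set.range v)) := hvert ▸ ⟨a, rfl⟩
    have h2 := (mem_extremePoints.1 h1).2 (v b) (subset_convexHull ℝ _ ⟨b, rfl⟩) (v c)
      (subset_convexHull ℝ _ ⟨c, rfl⟩) ⟨s, t, hs, ht, hst, H.symm⟩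
    exact hab (hinj h2.1).symm
  rcases lt_trichotomy α 0 with hα | hα | hα
  · -- `v j` lies strictly between `v k` and `v i`
    have hβ : 0 < β := by linarith
    refine hext j k i β⁻¹ (-α / β) (Ne.symm hkj) (by positivity) (div_pos (by linarith) hβ)
      (by field_simp; linarith) ?_
    rw [h, smul_add, smul_smul, smul_smul, inv_mul_cancel₀ hβ.ne']
    module
  · obtain rfl : β = 1 := by linarith
    exact hkj (hinj (by simpa [hα] using h))
  rcases lt_trichotomy β 0 with hβ | hβ | hβ
  · -- `v i` lies strictly between `v k` and `v j`
    refine hext i k j α⁻¹ (-β / α) (Ne.symm hki) (by positivity) (div_pos (by linarith) hα)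
      (by field_simp; linarith) ?_
    rw [h, smul_add, smul_smul, smul_smul, inv_mul_cancel₀ hα.ne']
    module
  · obtain rfl : α = 1 := by linarith
    exact hki (hinj (by simpa [hβ] using h))
  · exact hext k i j α β hki hα hβ hαβ h

theorem pointed_innerSL [Fintype ι] {v : ι → V}
    (h0 : (0 : V) ∈ interior (convexHull ℝ (Set.range v))) :
    Pointed (fun k => innerSL ℝ (v k)) Finset.univ := by
  intro x hx
  have hsub : convexHull ℝ (Set.range v) ⊆ {p | ⟪x, p⟫ ≤ 0} := by
    refine convexHull_min ?_ ?_
    · rintro _ ⟨k, rfl⟩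
      simpa [real_inner_comm] using hx k (Finset.mem_univ k)
    · rintro p hp q hq a b ha hb hab
      simp only [Set.mem_ofPred_eq, inner_add_right, inner_smul_right] at *
      nlinarith
  have ht : Tendsto (fun t : ℝ => t • x) (𝓝[>] 0) (𝓝 0) := by
    have : Continuous (fun t : ℝ => t • x) := by fun_prop
    simpa using (this.tendsto 0).mono_left nhdsWithin_le_nhds
  obtain ⟨t, ht1, ht2⟩ := ((ht.eventually (mem_interior_iff_mem_nhds.1 h0)).and
    (self_mem_nhdsWithin)).exists
  have h1 : ⟪x, t • x⟫ ≤ 0 := hsub ht1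
  rw [inner_smul_right] at h1
  have h2 : ⟪x, x⟫ ≤ 0 := by
    by_contra! h
    exact (mul_pos ht2 h).not_ge h1
  exact inner_self_eq_zero.1 (le_antisymm h2 real_inner_self_nonneg)

/-- On the hyperplane of the `j`-th facet no other constraint degenerates to `0 ≤ 0`: it would force
`v k = v j`. -/
theorem shift_ne_zero {v : ι → V} (hinj : Function.Injective v) {j k : ι} (hkj : k ≠ j) {u : V}
    (hu : innerSL ℝ (v j) u = 1) (h : res (fun k => innerSL ℝ (v k)) j k = 0) :
    shift (fun k => innerSL ℝ (v k)) j u (fun _ => 1) k ≠ 0 := by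
  intro hs
  refine hkj (hinj (ext_inner_right ℝ fun w => ?_))
  simp only [shift, innerSL_apply_apply] at hs hu
  -- project `w` onto the kernel of `⟪v j, ·⟫` along `u`
  have h1 : ⟪v k, w - ⟪v j, w⟫ • u⟫ = 0 := DFunLike.congr_fun h
    ⟨w - ⟪v j, w⟫ • u, by simp [inner_sub_right, inner_smul_right, hu]⟩
  rw [inner_sub_right, inner_smul_right] at h1
  have h2 : ⟪v k, u⟫ = 1 := by linarith
  rw [h2] at h1
  linarith

/-- On the intersection of the hyperplanes of the `j`-th and `i`-th facets no third constraint
degenerates to `0 ≤ 0`: it would force `v k` to lie on the line through `v i` and `v j`. -/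
theorem shift_shift_ne_zero {v : ι → V} (hinj : Function.Injective v)
    (hvert : Set.range v = Set.extremePoints ℝ (convexHull ℝ (Set.range v)))
    {i j k : ι} (hki : k ≠ i) (hkj : k ≠ j) {ℓ : ι → V →L[ℝ] ℝ}
    (hℓ : ℓ = fun k => innerSL ℝ (v k)) {u : V} (hu : ℓ j u = 1)
    {u' : (ℓ j).ker} (hu' : res ℓ j i u' = 1) (h : res (res ℓ j) i k = 0) :
    shift (res ℓ j) i u' (shift ℓ j u (fun _ => 1)) k ≠ 0 := by
  intro hs
  have hju' : ℓ j u' = 0 := LinearMap.mem_ker.1 u'.2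
  simp only [shift, res, ContinuousLinearMap.comp_apply, Submodule.subtypeL_apply] at hs hu'
  refine not_collinear hinj hvert hki hkj (α := ℓ k u') (β := ℓ k u - ℓ i u * ℓ k u')
    (by linarith) (ext_inner_right ℝ fun w => ?_)
  -- project `w` onto `ker ℓ j` along `u`, then onto `ker ℓ j ∩ ker ℓ i` along `u'`
  have h1 : ℓ k (w - ℓ j w • u - ℓ i (w - ℓ j w • u) • (u' : V)) = 0 := DFunLike.congr_fun h
    ⟨⟨w - ℓ j w • u, by simp [hu]⟩ - ℓ i (w - ℓ j w • u) • u', by simp [res, hu']⟩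
  simp only [map_sub, map_smul, smul_eq_mul] at h1
  have e : ∀ k w, ⟪v k, w⟫ = ℓ k w := by simp [hℓ]
  simp only [inner_add_left, inner_smul_left, e]
  simp
  linarith

end geometry
end PolyVol

open PolyVol

/-! ### The Hessian at `(1,…,1)` -/

/-- The volume `f(c) = vol(P°(c))` of the generalized polar dual is
twice continuously differentiable near `c = (1,…,1)`, and the Izmestiev matrix `M`
(the Hessian of `f` at `(1,…,1)`) vanishes at off-diagonal positions that are not edges
of the edge-graph of `P`. -/
theorem stmt_4 {d n : ℕ}
    (v : Fin n → EuclideanSpace ℝ (Fin d))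
    (P : Set (EuclideanSpace ℝ (Fin d)))
    (hP : P = convexHull ℝ (Set.range v))
    (hfull : affineSpan ℝ P = ⊤)
    (hinj : Function.Injective v)
    (hvert : Set.range v = Set.extremePoints ℝ P)
    (h0 : (0 : EuclideanSpace ℝ (Fin d)) ∈ interior P)
    (Adj : Fin n → Fin n → Prop)
    (hAdj : ∀ i j, Adj i j ↔ i ≠ j ∧ IsExtreme ℝ P (segment ℝ (v i) (v j)))
    (f : (Fin n → ℝ) → ℝ)
    (hf : ∀ c, f c =
      (volume {x : EuclideanSpace ℝ (Fin d) | ∀ i, ⟪x, v i⟫ ≤ c i}).toReal)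
    (M : Matrix (Fin n) (Fin n) ℝ)
    (hM : ∀ i j, M i j =
      fderiv ℝ (fun c => fderiv ℝ f c (Pi.single j 1)) (fun _ => 1) (Pi.single i 1)) :
    ContDiffAt ℝ 2 f (fun _ => 1) ∧
    (∀ i j, i ≠ j → ¬ Adj i j → M i j = 0) := by
  subst hP
  set ℓ : Fin n → EuclideanSpace ℝ (Fin d) →L[ℝ] ℝ := fun k => innerSL ℝ (v k) with hℓ
  set S : Finset (Fin n) := Finset.univ with hS
  have hfv : f = vol volume ℓ S := by
    funext c
    rw [hf, vol]
    congr 2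
    ext x
    simp [poly, hℓ, hS, real_inner_comm]
  have hpt : Pointed ℓ S := pointed_innerSL h0
  choose u ν hs using fun j => exists_isSlice (volume : Measure (EuclideanSpace ℝ (Fin d))) (ℓ j)
  have hhaar := fun j => (hs j).haar
  choose u' ν' hs' using fun j k => exists_isSlice (ν j) (res ℓ j k)
  have hhaar' := fun j k => (hs' j k).haar
  set b₁ : Fin n → Fin n → ℝ := fun j => shift ℓ j (u j) (fun _ => 1) with hb₁
  set b₂ : Fin n → Fin n → Fin n → ℝ := fun j i => shift (res ℓ j) i (u' j i) (b₁ j) with hb₂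
  have hz₁ : ∀ j, ℓ j ≠ 0 → ∀ k ∈ S.erase j, res ℓ j k = 0 → b₁ j k ≠ 0 := fun j hj k hk h =>
    shift_ne_zero hinj (Finset.mem_erase.1 hk).1 ((hs j).apply_eq_one hj) h
  have hz₂ : ∀ j i, ℓ j ≠ 0 → res ℓ j i ≠ 0 → ∀ k ∈ (S.erase j).erase i,
      res (res ℓ j) i k = 0 → b₂ j i k ≠ 0 := fun j i hj hi k hk h =>
    shift_shift_ne_zero hinj hvert (Finset.mem_erase.1 hk).1
      (Finset.mem_erase.1 (Finset.mem_erase.1 hk).2).1 hℓ ((hs j).apply_eq_one hj)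
      ((hs' j i).apply_eq_one hi) h
  have step₁ := fun j (hj : ℓ j ≠ 0) => contDiffAt_vol_succ 0 (hpt.res j) (hz₁ j hj) (hs' j)
    fun i _ hi0 => contDiffAt_zero_vol ((hpt.res j).res i) (ν' j i)
      (hz₂ j i hj hi0)
  have step₀ := contDiffAt_vol_succ (b₀ := fun _ => 1) 1 hpt (fun _ _ _ => one_ne_zero) hs
    fun j _ hj => by simpa using (step₁ j hj).2
  rw [hfv] at hM ⊢
  refine ⟨by simpa [one_add_one_eq_two] using step₀.2, fun i j hij hadj => ?_⟩
  have hev : (fun c => fderiv ℝ (vol volume ℓ S) c (Pi.single j 1)) =ᶠ[𝓝 fun _ => 1]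
      partialVol ℓ S u ν j := by
    filter_upwards [step₀.1] with c hc
    rw [hc.fderiv]
    simp [Pi.single_apply]
  rw [hM, hev.fderiv_eq]
  by_cases hj : ℓ j = 0
  · rw [funext fun b => show partialVol ℓ S u ν j b = _ from if_neg fun h => h.2 hj]
    simp
  rw [funext fun b => show partialVol ℓ S u ν j b = _ from if_pos ⟨Finset.mem_univ j, hj⟩]
  -- `i ≠ j`, so moving `c` along the `i`-th axis moves `shift ℓ j (u j) c` along the same axis
  have hshift : HasLineDerivAt ℝ (fun b => vol (ν j) (res ℓ j) (S.erase j) (shift ℓ j (u j) b))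
      (partialVol (res ℓ j) (S.erase j) (u' j) (ν' j) i (b₁ j)) (fun _ => 1) (Pi.single i 1) := by
    have h1 := (step₁ j hj).1.self_of_nhds.hasLineDerivAt (Pi.single i 1)
    have h2 : (fun t : ℝ => shift ℓ j (u j) ((fun _ => 1) + t • Pi.single i 1)) =
        fun t => b₁ j + t • Pi.single i 1 := by
      funext t k
      simp [shift, hb₁, Pi.single_apply, Ne.symm hij]
      ring
    rw [HasLineDerivAt] at h1 ⊢
    simp only [fun t : ℝ => congrFun h2 t]
    simpa [Pi.single_apply] using h1
  have hdiff : DifferentiableAt ℝ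
      (fun b => vol (ν j) (res ℓ j) (S.erase j) (shift ℓ j (u j) b)) (fun _ => 1) :=
    DifferentiableAt.comp (fun _ => 1) (g := vol (ν j) (res ℓ j) (S.erase j))
      (f := shift ℓ j (u j)) (step₁ j hj).1.self_of_nhds.differentiableAt
      ((contDiff_shift (n := 1) ℓ j (u j)).differentiable (by simp) _)
  rw [← hdiff.lineDeriv_eq_fderiv, hshift.lineDeriv]
  by_contra hne
  have hi : i ∈ S.erase j ∧ res ℓ j i ≠ 0 := by
    by_contra h
    exact hne (if_neg h)
  rw [show partialVol (res ℓ j) (S.erase j) (u' j) (ν' j) i (b₁ j) = _ from if_pos hi] at hne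
  obtain ⟨y, hy⟩ := exists_strict (ν' j i) (hz₂ j i hj hi.2) hne
  have e1 : ℓ j (u j) = 1 := (hs j).apply_eq_one hj
  have e2 : ℓ i (u' j i) = 1 := (hs' j i).apply_eq_one hi.2
  have e3 : ℓ j (u' j i) = 0 := LinearMap.mem_ker.1 (u' j i).2
  have e4 : ℓ i (y : (ℓ j).ker) = 0 := LinearMap.mem_ker.1 y.2
  have e5 : ℓ j (y : (ℓ j).ker) = 0 := LinearMap.mem_ker.1 (y : (ℓ j).ker).2
  have e : ∀ k w, ⟪w, v k⟫ = ℓ k w := fun k w => by simp [hℓ, real_inner_comm]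
  refine hadj ((hAdj i j).2 ⟨hij, isExtreme_segment
    (x := u j + b₁ j i • (u' j i : EuclideanSpace ℝ (Fin d)) + (y : (ℓ j).ker)) ?_ ?_ ?_⟩)
  · rw [e]
    simp [e2, e4, hb₁, shift]
  · rw [e]
    simp [e1, e3, e5]
  · intro k hki hkj
    rw [e]
    have h1 : ℓ k (y : (ℓ j).ker) < 1 - 1 * ℓ k (u j) - b₁ j i * ℓ k (u' j i) :=
      hy k (Finset.mem_erase.2 ⟨hki, Finset.mem_erase.2 ⟨hkj, Finset.mem_univ k⟩⟩)
    simp only [map_add, map_smul, smul_eq_mul]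
    linarith
end

section
/- The Izmestiev matrix M satisfies MΦᵀ = 0, i.e. for every i ∈ {1,…,n} one has Σ_{j=1}^n M_{ij} v_j = 0 in ℝ^d, where Φ ∈ ℝ^{d×n} is the matrix whose columns are v_1, …, v_n. -/
/-! The volume `f` of `P°(c)` is invariant under translations of the region, which move `c` in the
directions `(⟨t, v i⟩)ᵢ`. Hence `∑ j, ⟨t, v j⟩ • ∂f/∂c_j` vanishes identically, and differentiating
once more at `c = (1, …, 1)` gives `⟨t, ∑ j, M i j • v j⟩ = 0` for every `t`.

The second differentiation needs each `∂f/∂c_j` to be differentiable at `(1, …, 1)`; otherwise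
`fderiv` is `0` by convention and individual entries of `M` would be meaningless. This is the
bulk of the proof. By Cavalieri's principle (`vol_update_sub`) the partial derivatives of a volume
function are volumes of facets, which are again volume functions of the same kind, one dimension
lower. A volume function is continuous as soon as no constraint is identically an equality
(`Generic`, `continuousAt_vol`), and continuous partial derivatives give differentiability
(`hasFDerivAt_of_partial`). Applying this twice, what must be excluded is a degenerate constraint
on a facet, or on a facet of a facet. The former would force two of the `v i` to coincide
(`generic_facet`), the latter would put three of them on a line (`generic_facet_facet`), which is
impossible for vertices of a polytope (`not_collinear_of_extreme`).
-/

open MeasureTheory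
open scoped RealInnerProductSpace

namespace Izmestiev

open Filter Topology

section

variable {ι E : Type*} [NormedAddCommGroup E] [NormedSpace ℝ E]

/-! ### Regions and their facets -/

/-- The region cut out by the inequalities `ℓ i x ≤ c i`. -/
def region (ℓ : ι → E →L[ℝ] ℝ) (c : ι → ℝ) : Set E := {x | ∀ i, ℓ i x ≤ c i}

/-- A quantitative form of boundedness of all regions (the normals `ℓ i` positively span the dual
space); unlike boundedness of one region, it passes at once to subspaces. -/
def Coercive (ℓ : ι → E →L[ℝ] ℝ) : Prop :=
  ∃ C : ℝ, ∀ x r, 0 ≤ r → (∀ i, ℓ i x ≤ r) → ‖x‖ ≤ C * r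

/-- No constraint is identically an equality: a constraint with zero normal is strictly satisfied
or strictly violated. -/
def Generic (ℓ : ι → E →L[ℝ] ℝ) (c : ι → ℝ) : Prop := ∀ i, ℓ i ≠ 0 ∨ c i ≠ 0

/-- The normals restricted to the direction space of the `k`-th facet hyperplane. -/
def facetFun (ℓ : ι → E →L[ℝ] ℝ) (k : ι) : ι → (ℓ k).ker →L[ℝ] ℝ :=
  fun i => (ℓ i).comp (ℓ k).ker.subtypeL

/-- The right-hand sides of the constraints on the `k`-th facet `{x | ℓ k x = c k}`, in the
coordinate `y = x - c k • u` on the facet hyperplane, where `ℓ k u = 1`. The `k`-th constraint has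
become void; its right-hand side is set to `1`, so that it reads `0 ≤ 1` and counts as strictly
satisfied. -/
def facetRhs [DecidableEq ι] (ℓ : ι → E →L[ℝ] ℝ) (k : ι) (u : E) (c : ι → ℝ) : ι → ℝ :=
  fun i => if i = k then 1 else c i - c k * ℓ i u

lemma Coercive.facet {ℓ : ι → E →L[ℝ] ℝ} (h : Coercive ℓ) (k : ι) : Coercive (facetFun ℓ k) := by
  obtain ⟨C, hC⟩ := h
  exact ⟨C, fun x r hr hx => hC x r hr hx⟩

lemma Coercive.region_subset [Fintype ι] {ℓ : ι → E →L[ℝ] ℝ} (h : Coercive ℓ) :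
    ∃ C, 0 ≤ C ∧ ∀ c, region ℓ c ⊆ Metric.closedBall 0 (C * ‖c‖) := by
  obtain ⟨C, hC⟩ := h
  refine ⟨|C|, abs_nonneg C, fun c x hx => ?_⟩
  rw [mem_closedBall_zero_iff]
  refine (hC x ‖c‖ (norm_nonneg c)
    fun i => (hx i).trans ((le_abs_self _).trans (norm_le_pi_norm c i))).trans ?_
  gcongr
  exact le_abs_self C

lemma Generic.eventually [Finite ι] {ℓ : ι → E →L[ℝ] ℝ} {c : ι → ℝ} (h : Generic ℓ c) :
    ∀ᶠ c' in 𝓝 c, Generic ℓ c' := by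
  refine eventually_all.2 fun i => ?_
  rcases h i with h | h
  · exact Eventually.of_forall fun _ => Or.inl h
  · exact ((continuous_apply i).continuousAt.eventually_ne h).mono fun _ => Or.inr

lemma differentiable_facetRhs [Fintype ι] [DecidableEq ι] (ℓ : ι → E →L[ℝ] ℝ) (k : ι) (u : E) :
    Differentiable ℝ (facetRhs ℓ k u) := by
  rw [differentiable_pi]
  intro i
  unfold facetRhs
  split_ifs
  · fun_prop
  · fun_prop

lemma isClosed_region (ℓ : ι → E →L[ℝ] ℝ) (c : ι → ℝ) : IsClosed (region ℓ c) := by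
  simp only [region, Set.ofPred_forall]
  exact isClosed_iInter fun i => isClosed_le (ℓ i).continuous continuous_const

lemma exists_apply_eq_one {f : E →L[ℝ] ℝ} (hf : f ≠ 0) : ∃ u, f u = 1 := by
  obtain ⟨z, hz⟩ : ∃ z, f z ≠ 0 := by
    by_contra! h
    exact hf (ContinuousLinearMap.ext h)
  exact ⟨(f z)⁻¹ • z, by simp [hz]⟩

/-! ### Strict partial derivatives -/

/-- `F` has partial derivative `A` in direction `k` at `c₀`, uniformly near `c₀`. -/
def HasStrictPartial [Fintype ι] [DecidableEq ι] (F : (ι → ℝ) → ℝ) (A : ℝ) (k : ι)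
    (c₀ : ι → ℝ) : Prop :=
  ∀ ε > 0, ∃ δ > 0, ∀ c s, ‖c - c₀‖ < δ → |s - c₀ k| < δ →
    |F (Function.update c k s) - F c - A * (s - c k)| ≤ ε * |s - c k|

/-- Strict partial derivatives add up to a derivative: pass from `c₀` to `c` by changing one
coordinate at a time. -/
lemma hasFDerivAt_of_partial [Fintype ι] [DecidableEq ι] {F : (ι → ℝ) → ℝ} {A : ι → ℝ}
    {c₀ : ι → ℝ} (h : ∀ k, HasStrictPartial F (A k) k c₀) :
    HasFDerivAt F (∑ k, A k • ContinuousLinearMap.proj (R := ℝ) (φ := fun _ : ι => ℝ) k) c₀ := by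
  rw [hasFDerivAt_iff_isLittleO, Asymptotics.isLittleO_iff]
  intro ε hε
  set η := ε / (Fintype.card ι + 1) with hη
  have hη0 : 0 < η := by positivity
  choose δ hδ0 hδ using fun k => h k η hη0
  have hev : ∀ᶠ c in 𝓝 c₀, ∀ k, ‖c - c₀‖ < δ k :=
    eventually_all.2 fun k => by
      filter_upwards [Metric.ball_mem_nhds c₀ (hδ0 k)] with c hc
      rwa [mem_ball_iff_norm] at hc
  filter_upwards [hev] with c hc
  have key : ∀ s : Finset ι,
      |F (s.piecewise c c₀) - F c₀ - ∑ k ∈ s, A k * (c k - c₀ k)| ≤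
        η * ∑ k ∈ s, |c k - c₀ k| := by
    intro s
    induction s using Finset.induction_on with
    | empty => simp
    | insert j s hj ih =>
      rw [Finset.piecewise_insert, Finset.sum_insert hj, Finset.sum_insert hj]
      have hle : ‖s.piecewise c c₀ - c₀‖ ≤ ‖c - c₀‖ := by
        refine (pi_norm_le_iff_of_nonneg (norm_nonneg _)).2 fun i => ?_
        by_cases hi : i ∈ s
        · simpa [hi] using norm_le_pi_norm (c - c₀) i
        · simp [hi]
      have h1 := hδ j (s.piecewise c c₀) (c j) (hle.trans_lt (hc j))
        ((norm_le_pi_norm (c - c₀) j).trans_lt (hc j))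
      rw [Finset.piecewise_eq_of_notMem _ _ _ hj] at h1
      rw [abs_le] at h1 ih ⊢
      constructor <;> nlinarith [h1.1, h1.2, ih.1, ih.2]
  have hu := key Finset.univ
  rw [Finset.piecewise_univ] at hu
  have hL : (∑ k, A k • ContinuousLinearMap.proj (R := ℝ) (φ := fun _ : ι => ℝ) k) (c - c₀) =
      ∑ k, A k * (c k - c₀ k) := by
    simp
  rw [hL, Real.norm_eq_abs]
  refine hu.trans ?_
  have hsum : ∑ k, |c k - c₀ k| ≤ Fintype.card ι * ‖c - c₀‖ := by
    refine (Finset.sum_le_card_nsmul _ _ ‖c - c₀‖ fun k _ => norm_le_pi_norm (c - c₀) k).trans ?_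
    simp
  calc η * ∑ k, |c k - c₀ k| ≤ η * (Fintype.card ι * ‖c - c₀‖) := by gcongr
    _ ≤ η * ((Fintype.card ι + 1) * ‖c - c₀‖) := by gcongr; linarith
    _ = ε * ‖c - c₀‖ := by rw [hη]; field_simp

/-! ### The volume function -/

/-- Coordinates `(t, y) ↦ t • u + y` adapted to the level sets of a functional `f` with
`f u = 1`. -/
noncomputable def splitEquiv [FiniteDimensional ℝ E] (f : E →L[ℝ] ℝ) (u : E) (hu : f u = 1) :
    (ℝ × f.ker) ≃L[ℝ] E :=
  LinearEquiv.toContinuousLinearEquiv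
    { toFun := fun p => p.1 • u + p.2
      map_add' := fun p q => by simp [add_smul]; abel
      map_smul' := fun a p => by simp [mul_smul]
      invFun := fun x => (f x, ⟨x - f x • u, by simp [hu]⟩)
      left_inv := fun p => by
        have : f (p.2 : E) = 0 := p.2.2
        ext <;> simp [hu, this]
      right_inv := fun x => by simp }

lemma splitEquiv_apply [FiniteDimensional ℝ E] (f : E →L[ℝ] ℝ) (u : E) (hu : f u = 1)
    (p : ℝ × f.ker) :
    splitEquiv f u hu p = p.1 • u + p.2 := rfl

variable [MeasurableSpace E]

/-- The volume of the region as a function of the right-hand sides. -/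
noncomputable def vol (ℓ : ι → E →L[ℝ] ℝ) (μ : Measure E) (c : ι → ℝ) : ℝ := μ.real (region ℓ c)

lemma Coercive.region_ne_top [FiniteDimensional ℝ E] [Fintype ι] {ℓ : ι → E →L[ℝ] ℝ}
    (μ : Measure E) [μ.IsAddHaarMeasure] (h : Coercive ℓ) (c : ι → ℝ) : μ (region ℓ c) ≠ ⊤ := by
  obtain ⟨C, -, hC⟩ := h.region_subset
  exact measure_ne_top_of_subset (hC c) measure_closedBall_lt_top.ne

/-- A constraint with zero normal that is not an equality does not affect the volume locally. -/
lemma hasStrictPartial_vol_zero [Fintype ι] [DecidableEq ι] {ℓ : ι → E →L[ℝ] ℝ} (μ : Measure E)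
    (k : ι) (hk : ℓ k = 0) {c₀ : ι → ℝ} (hc₀ : c₀ k ≠ 0) :
    HasStrictPartial (vol ℓ μ) 0 k c₀ := by
  intro ε hε
  refine ⟨|c₀ k|, abs_pos.2 hc₀, fun c s hc hs => ?_⟩
  have hck : |c k - c₀ k| < |c₀ k| := (norm_le_pi_norm (c - c₀) k).trans_lt hc
  have hiff : 0 ≤ s ↔ 0 ≤ c k := by
    rw [abs_lt] at hck hs
    rcases hc₀.lt_or_gt with hneg | hpos
    · rw [abs_of_neg hneg] at hck hs
      constructor <;> intro <;> linarith
    · rw [abs_of_pos hpos] at hck hs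
      constructor <;> intro <;> linarith
  have : region ℓ (Function.update c k s) = region ℓ c := by
    ext x
    refine forall_congr' fun i => ?_
    rcases eq_or_ne i k with rfl | hi
    · simpa [hk] using hiff
    · simp [hi]
  simp only [vol, this, sub_self, zero_mul, abs_zero]
  positivity

/-- Translating the region changes the right-hand sides by `(ℓ i t)ᵢ` and preserves the volume. -/
lemma vol_translate [BorelSpace E] {ℓ : ι → E →L[ℝ] ℝ} (μ : Measure E)
    [μ.IsAddLeftInvariant] (c : ι → ℝ) (t : E) : vol ℓ μ (c + fun i => ℓ i t) = vol ℓ μ c := by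
  have : (fun x => t + x) ⁻¹' region ℓ (c + fun i => ℓ i t) = region ℓ c := by
    ext x
    exact forall_congr' fun i => by simp [add_comm (ℓ i t)]
  simp only [vol, measureReal_def]
  rw [← this, measure_preimage_add]

/-- The derivative of the volume vanishes in translation directions; at points of
non-differentiability this holds by the convention `fderiv = 0`. -/
lemma fderiv_vol_translate [Fintype ι] [BorelSpace E] {ℓ : ι → E →L[ℝ] ℝ} (μ : Measure E)
    [μ.IsAddLeftInvariant] (c : ι → ℝ) (t : E) :
    fderiv ℝ (vol ℓ μ) c (fun i => ℓ i t) = 0 := by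
  by_cases hd : DifferentiableAt ℝ (vol ℓ μ) c
  · rw [← hd.lineDeriv_eq_fderiv, lineDeriv]
    have : (fun s : ℝ => vol ℓ μ (c + s • fun i => ℓ i t)) = fun _ => vol ℓ μ c := by
      ext s
      rw [← vol_translate μ c (s • t)]
      congr 1
      ext i
      simp
    rw [this, deriv_const]
  · simp [fderiv_zero_of_not_differentiableAt hd]

variable [BorelSpace E] [FiniteDimensional ℝ E]

lemma hyperplane_null (μ : Measure E) [μ.IsAddHaarMeasure] {f : E →L[ℝ] ℝ} (hf : f ≠ 0) (a : ℝ) :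
    μ {x | f x = a} = 0 := by
  obtain ⟨z, hz⟩ : ∃ z, f z ≠ 0 := by
    by_contra! h
    exact hf (ContinuousLinearMap.ext h)
  have h1 : {x | f x = a} = (fun x => -((a / f z) • z) + x) ⁻¹' (f.ker : Set E) := by
    ext x
    simp only [Set.mem_ofPred_eq, Set.mem_preimage, SetLike.mem_coe, LinearMap.mem_ker]
    simp [hz, neg_add_eq_zero, eq_comm (a := a)]
  rw [h1, measure_preimage_add]
  refine Measure.addHaar_submodule μ _ fun h => hz ?_
  have : z ∈ f.ker := h ▸ Submodule.mem_top
  simpa using this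

variable [Fintype ι] {ℓ : ι → E →L[ℝ] ℝ} (μ : Measure E) [μ.IsAddHaarMeasure]

/-- The volume is continuous at generic right-hand sides: off the finitely many bounding
hyperplanes, membership in the region is locally constant in the right-hand sides. -/
lemma continuousAt_vol (h : Coercive ℓ) {c₀ : ι → ℝ} (hg : Generic ℓ c₀) :
    ContinuousAt (vol ℓ μ) c₀ := by
  classical
  obtain ⟨C, hC0, hC⟩ := h.region_subset
  have hm : ∀ c, MeasurableSet (region ℓ c) := fun c => (isClosed_region ℓ c).measurableSet
  have e : vol ℓ μ = fun c => ∫ x, (region ℓ c).indicator (fun _ => (1 : ℝ)) x ∂μ := by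
    ext c
    rw [integral_indicator_const _ (hm c)]
    simp [vol]
  rw [e]
  refine continuousAt_of_dominated
    (bound := (Metric.closedBall (0 : E) (C * (‖c₀‖ + 1))).indicator (fun _ => (1 : ℝ)))
    (Eventually.of_forall fun c => (measurable_const.indicator (hm c)).aestronglyMeasurable)
    ?_ ?_ ?_
  · filter_upwards [Metric.ball_mem_nhds c₀ one_pos] with c hc
    refine Eventually.of_forall fun x => ?_
    rw [Set.indicator_apply, Set.indicator_apply]
    split_ifs with h1 h2
    · simp
    · refine absurd (Metric.closedBall_subset_closedBall ?_ (hC c h1)) h2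
      gcongr
      have := norm_le_norm_add_norm_sub' c c₀
      rw [mem_ball_iff_norm] at hc
      linarith
    · simp
    · simp
  · exact (integrable_indicator_iff Metric.isClosed_closedBall.measurableSet).2
      (integrableOn_const measure_closedBall_lt_top.ne)
  · have hae : ∀ᵐ x ∂μ, ∀ i, ℓ i x ≠ c₀ i := by
      rw [ae_all_iff]
      intro i
      by_cases hi : ℓ i = 0
      · have := (hg i).resolve_left (not_not.2 hi)
        exact Eventually.of_forall fun x => by simpa [hi] using this.symm
      · rw [ae_iff]
        simpa using hyperplane_null μ hi (c₀ i)
    filter_upwards [hae] with x hx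
    have hev : ∀ i, ∀ᶠ c : ι → ℝ in 𝓝 c₀, (ℓ i x ≤ c i ↔ ℓ i x ≤ c₀ i) := by
      intro i
      have hci : Tendsto (fun c : ι → ℝ => c i) (𝓝 c₀) (𝓝 (c₀ i)) :=
        (continuous_apply i).tendsto c₀
      rcases (hx i).lt_or_gt with hlt | hgt
      · filter_upwards [hci.eventually_const_lt hlt] with c hc
        exact ⟨fun _ => hlt.le, fun _ => hc.le⟩
      · filter_upwards [hci.eventually_lt_const hgt] with c hc
        exact ⟨fun h => absurd h hc.not_ge, fun h => absurd h hgt.not_ge⟩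
    refine ContinuousAt.congr (f := fun _ => (region ℓ c₀).indicator (fun _ => (1 : ℝ)) x)
      continuousAt_const ?_
    filter_upwards [eventually_all.2 hev] with c hc
    have : x ∈ region ℓ c ↔ x ∈ region ℓ c₀ := forall_congr' hc
    simp [Set.indicator_apply, this]

/-- A Haar measure on the hyperplane can be normalised so that the adapted coordinates preserve
measure; for Lebesgue measure on Euclidean space this is `(d - 1)`-dimensional Lebesgue measure
divided by the length of the normal. -/
lemma exists_slice_measure (f : E →L[ℝ] ℝ) (u : E) (hu : f u = 1) :
    ∃ ν : Measure f.ker, ν.IsAddHaarMeasure ∧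
      MeasurePreserving (splitEquiv f u hu) ((volume : Measure ℝ).prod ν) μ := by
  let ν₀ : Measure f.ker := Measure.addHaar
  have : (Measure.map (splitEquiv f u hu) ((volume : Measure ℝ).prod ν₀)).IsAddHaarMeasure :=
    inferInstance
  have ha := Measure.isAddLeftInvariant_eq_smul μ
    (Measure.map (splitEquiv f u hu) ((volume : Measure ℝ).prod ν₀))
  have ha0 := Measure.addHaarScalarFactor_pos_of_isAddHaarMeasure μ
    (Measure.map (splitEquiv f u hu) ((volume : Measure ℝ).prod ν₀))
  set a := Measure.addHaarScalarFactor μ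
    (Measure.map (splitEquiv f u hu) ((volume : Measure ℝ).prod ν₀))
  refine ⟨(a : ENNReal) • ν₀, Measure.IsAddHaarMeasure.smul _ (by simpa using ha0.ne') (by simp),
    (splitEquiv f u hu).continuous.measurable, ?_⟩
  rw [Measure.prod_smul_right, Measure.map_smul, ha]
  rfl

variable [DecidableEq ι]

/-! ### Derivatives of the volume -/

/-- Cavalieri's principle: moving the `k`-th constraint sweeps out the facets. -/
lemma vol_update_sub (h : Coercive ℓ) (k : ι) (u : E) (hu : ℓ k u = 1)
    (ν : Measure (ℓ k).ker) [ν.IsAddHaarMeasure]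
    (hν : MeasurePreserving (splitEquiv (ℓ k) u hu) ((volume : Measure ℝ).prod ν) μ)
    (c : ι → ℝ) (a b : ℝ) :
    vol ℓ μ (Function.update c k b) - vol ℓ μ (Function.update c k a) =
      ∫ t in a..b, vol (facetFun ℓ k) ν (facetRhs ℓ k u (Function.update c k t)) := by
  wlog hab : a ≤ b generalizing a b
  · rw [intervalIntegral.integral_symm, ← this b a (le_of_not_ge hab)]
    ring
  have hm : ∀ c, MeasurableSet (region ℓ c) := fun c => (isClosed_region ℓ c).measurableSet
  have hsub : region ℓ (Function.update c k a) ⊆ region ℓ (Function.update c k b) := by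
    intro x hx i
    have := hx i
    rcases eq_or_ne i k with rfl | hi
    · simp only [Function.update_self] at this ⊢
      exact this.trans hab
    · simpa [hi] using this
  set D := region ℓ (Function.update c k b) \ region ℓ (Function.update c k a) with hD
  have hDm : MeasurableSet D := (hm _).diff (hm _)
  have hDtop : μ D ≠ ⊤ :=
    measure_ne_top_of_subset Set.sdiff_subset (h.region_ne_top μ (Function.update c k b))
  set W := splitEquiv (ℓ k) u hu ⁻¹' D with hW
  have hWm : MeasurableSet W := hν.measurable hDm
  have hWμ : ((volume : Measure ℝ).prod ν) W = μ D := hν.measure_preimage hDm.nullMeasurableSet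
  have hslice : ∀ t, ν.real (Prod.mk t ⁻¹' W) = (Set.Ioc a b).indicator
      (fun t => vol (facetFun ℓ k) ν (facetRhs ℓ k u (Function.update c k t))) t := by
    intro t
    have hmem : ∀ y : (ℓ k).ker, ∀ s, t • u + (y : E) ∈ region ℓ (Function.update c k s) ↔
        t ≤ s ∧ y ∈ region (facetFun ℓ k) (facetRhs ℓ k u (Function.update c k t)) := by
      intro y s
      have hy : ℓ k (y : E) = 0 := y.2
      constructor
      · intro hx
        refine ⟨by simpa [hu, hy] using hx k, fun i => ?_⟩
        rcases eq_or_ne i k with rfl | hi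
        · simp [facetFun, facetRhs]
        · have := hx i
          simp only [map_add, map_smul, smul_eq_mul, Function.update_of_ne hi] at this
          simp only [facetFun, facetRhs, hi, if_false, Function.update_of_ne hi,
            Function.update_self, ContinuousLinearMap.comp_apply, Submodule.subtypeL_apply]
          linarith
      · rintro ⟨hts, hx⟩ i
        rcases eq_or_ne i k with rfl | hi
        · simpa [hu, hy] using hts
        · have := hx i
          simp only [facetFun, facetRhs, hi, if_false, Function.update_of_ne hi,
            Function.update_self, ContinuousLinearMap.comp_apply, Submodule.subtypeL_apply] at this
          simp only [map_add, map_smul, smul_eq_mul, Function.update_of_ne hi]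
          linarith
    have hW' : ∀ y, y ∈ Prod.mk t ⁻¹' W ↔ t ∈ Set.Ioc a b ∧
        y ∈ region (facetFun ℓ k) (facetRhs ℓ k u (Function.update c k t)) := by
      intro y
      rw [Set.mem_preimage, hW, Set.mem_preimage, splitEquiv_apply, hD, Set.mem_sdiff, hmem, hmem,
        Set.mem_Ioc, ← not_le]
      tauto
    by_cases ht : t ∈ Set.Ioc a b
    · rw [Set.indicator_of_mem ht, vol]
      congr 1
      ext y
      simp [hW' y, ht]
    · rw [Set.indicator_of_notMem ht]
      have : Prod.mk t ⁻¹' W = ∅ := by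
        ext y
        simp [hW' y, ht]
      simp [this]
  calc vol ℓ μ (Function.update c k b) - vol ℓ μ (Function.update c k a)
      = μ.real D := by
        rw [hD, measureReal_sdiff hsub (hm _) (h.region_ne_top μ _)]
        rfl
    _ = ((volume : Measure ℝ).prod ν).real W := by rw [measureReal_def, measureReal_def, hWμ]
    _ = ∫ t, ν.real (Prod.mk t ⁻¹' W) := by
        rw [measureReal_def, Measure.prod_apply hWm]
        refine (integral_toReal (measurable_measure_prodMk_left hWm).aemeasurable ?_).symm
        exact Measure.ae_measure_lt_top hWm (by rw [hWμ]; exact hDtop)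
    _ = _ := by
        simp_rw [hslice]
        rw [integral_indicator measurableSet_Ioc, intervalIntegral.integral_of_le hab]

/-- The partial derivative of the volume is the volume of the facet, provided the constraints on
the facet are generic, so that the facet volume is continuous. -/
lemma hasStrictPartial_vol (h : Coercive ℓ) (k : ι) (u : E) (hu : ℓ k u = 1)
    (ν : Measure (ℓ k).ker) [ν.IsAddHaarMeasure]
    (hν : MeasurePreserving (splitEquiv (ℓ k) u hu) ((volume : Measure ℝ).prod ν) μ)
    {c₀ : ι → ℝ} (hg : Generic (facetFun ℓ k) (facetRhs ℓ k u c₀)) :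
    HasStrictPartial (vol ℓ μ) (vol (facetFun ℓ k) ν (facetRhs ℓ k u c₀)) k c₀ := by
  set G : (ι → ℝ) → ℝ := fun c => vol (facetFun ℓ k) ν (facetRhs ℓ k u c) with hG
  have hcont : ∀ᶠ c in 𝓝 c₀, ContinuousAt G c := by
    have hT := (differentiable_facetRhs ℓ k u).continuous
    filter_upwards [hT.continuousAt.eventually hg.eventually] with c hc
    exact ContinuousAt.comp (f := facetRhs ℓ k u) (continuousAt_vol ν (h.facet k) hc)
      hT.continuousAt
  intro ε hε
  have hclose : ∀ᶠ c in 𝓝 c₀, |G c - G c₀| < ε := by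
    have := (hcont.self_of_nhds).eventually (Metric.ball_mem_nhds _ hε)
    filter_upwards [this] with c hc
    simpa [Real.dist_eq] using hc
  obtain ⟨δ, hδ0, hδ⟩ := Metric.eventually_nhds_iff.1 (hcont.and hclose)
  refine ⟨δ, hδ0, fun c s hc hs => ?_⟩
  have hin : ∀ t ∈ Set.uIcc (c k) s, dist (Function.update c k t) c₀ < δ := by
    intro t ht
    rw [dist_pi_lt_iff hδ0]
    intro i
    rcases eq_or_ne i k with rfl | hi
    · have h1 : |c i - c₀ i| < δ := (norm_le_pi_norm (c - c₀) i).trans_lt hc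
      rw [Function.update_self, Real.dist_eq]
      rw [abs_lt] at h1 hs ⊢
      rw [Set.mem_uIcc] at ht
      constructor <;> rcases ht with ht | ht <;> linarith [ht.1, ht.2]
    · rw [Function.update_of_ne hi, dist_eq_norm]
      exact (norm_le_pi_norm (c - c₀) i).trans_lt hc
  have hint : IntervalIntegrable (fun t => G (Function.update c k t)) volume (c k) s := by
    refine ContinuousOn.intervalIntegrable fun t ht => ContinuousAt.continuousWithinAt ?_
    have hup : Continuous fun t => Function.update c k t := by fun_prop
    exact ContinuousAt.comp (f := fun t => Function.update c k t) (hδ (hin t ht)).1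
      hup.continuousAt
  have hftc := vol_update_sub μ h k u hu ν hν c (c k) s
  rw [Function.update_eq_self] at hftc
  have hconst : G c₀ * (s - c k) = ∫ _ in (c k)..s, G c₀ := by simp [mul_comm]
  change |vol ℓ μ (Function.update c k s) - vol ℓ μ c - G c₀ * (s - c k)| ≤ _
  rw [hftc, hconst, ← intervalIntegral.integral_sub hint (by simp), ← Real.norm_eq_abs]
  exact intervalIntegral.norm_integral_le_of_norm_le_const fun t ht =>
    (hδ (hin t (Set.uIoc_subset_uIcc ht))).2.le

/-- The volume is differentiable where no constraint, and no constraint on a facet, is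
degenerate. -/
lemma differentiableAt_vol (h : Coercive ℓ) {c₀ : ι → ℝ} (hg : Generic ℓ c₀)
    (hg' : ∀ k u, ℓ k u = 1 → Generic (facetFun ℓ k) (facetRhs ℓ k u c₀)) :
    DifferentiableAt ℝ (vol ℓ μ) c₀ := by
  have : ∀ k, ∃ A, HasStrictPartial (vol ℓ μ) A k c₀ := by
    intro k
    by_cases hk : ℓ k = 0
    · exact ⟨0, hasStrictPartial_vol_zero μ k hk ((hg k).resolve_left (not_not.2 hk))⟩
    · obtain ⟨u, hu⟩ := exists_apply_eq_one hk
      obtain ⟨ν, hν, hmp⟩ := exists_slice_measure μ (ℓ k) u hu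
      exact ⟨_, hasStrictPartial_vol μ h k u hu ν hmp (hg' k u hu)⟩
  choose A hA using this
  exact (hasFDerivAt_of_partial hA).differentiableAt

end

section

variable {ι E : Type*} [NormedAddCommGroup E] [NormedSpace ℝ E]

/-! ### Extreme points and the polar region -/

/-- No extreme point lies on the line through two others. -/
lemma not_collinear_of_extreme {P : Set E} {v : ι → E} (hinj : Function.Injective v)
    (hv : ∀ i, v i ∈ P.extremePoints ℝ) (i j k : ι) (hij : i ≠ j) (hik : i ≠ k) (a b : ℝ)
    (hab : a + b = 1) : v i ≠ a • v j + b • v k := by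
  intro h
  rcases lt_trichotomy a 0 with ha | rfl | ha
  · -- here `v k` lies strictly between `v i` and `v j`
    have hb : 0 < b := by linarith
    have := (mem_extremePoints.1 (hv k)).2 (v i) (hv i).1 (v j) (hv j).1
      ⟨1 / b, -a / b, by positivity, div_pos (by linarith) hb, by field_simp; linarith, by
        rw [h]
        match_scalars <;> field_simp; ring⟩
    exact hik (hinj this.1)
  · exact hik (hinj (by simpa [(by linarith : b = 1)] using h))
  rcases lt_trichotomy b 0 with hb | rfl | hb
  · -- here `v j` lies strictly between `v i` and `v k`
    have := (mem_extremePoints.1 (hv j)).2 (v i) (hv i).1 (v k) (hv k).1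
      ⟨1 / a, -b / a, by positivity, div_pos (by linarith) ha, by field_simp; linarith, by
        rw [h]
        match_scalars <;> field_simp; ring⟩
    exact hij (hinj this.1)
  · exact hij (hinj (by simpa [(by linarith : a = 1)] using h))
  · have := (mem_extremePoints.1 (hv i)).2 (v j) (hv j).1 (v k) (hv k).1 ⟨a, b, ha, hb, hab, h.symm⟩
    exact hij (hinj this.1.symm)

lemma extreme_ne_zero [Nontrivial E] {P : Set E} (h0 : (0 : E) ∈ interior P) {x : E}
    (hx : x ∈ P.extremePoints ℝ) : x ≠ 0 := by
  rintro rfl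
  obtain ⟨z, hz⟩ := exists_ne (0 : E)
  obtain ⟨δ, hδ0, hδ⟩ := Metric.mem_nhds_iff.1 (mem_interior_iff_mem_nhds.1 h0)
  have hz0 : 0 < ‖z‖ := norm_pos_iff.2 hz
  set y := (δ / 2 / ‖z‖) • z with hy
  have hyn : ‖y‖ = δ / 2 := by
    rw [hy, norm_smul, Real.norm_of_nonneg (by positivity)]
    field_simp
  have hm : ∀ w : E, ‖w‖ = δ / 2 → w ∈ P := fun w hw => hδ (by simp [hw, hδ0])
  have := (mem_extremePoints.1 hx).2 y (hm y hyn) (-y) (hm _ (by rwa [norm_neg]))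
    ⟨1 / 2, 1 / 2, by norm_num, by norm_num, by norm_num, by simp⟩
  rw [this.1, norm_zero] at hyn
  linarith

/-- A polytope with `0` in its interior contains a positive multiple of every vector, which bounds
the polar regions. -/
lemma coercive_inner {F : Type*} [NormedAddCommGroup F] [InnerProductSpace ℝ F] {v : ι → F}
    (h0 : (0 : F) ∈ interior (convexHull ℝ (Set.range v))) :
    Coercive fun i => innerSL ℝ (v i) := by
  obtain ⟨δ, hδ0, hδ⟩ := Metric.mem_nhds_iff.1 (mem_interior_iff_mem_nhds.1 h0)
  refine ⟨2 / δ, fun x r hr hx => ?_⟩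
  rcases eq_or_ne x 0 with rfl | hx0
  · simp only [norm_zero]; positivity
  have hxn : 0 < ‖x‖ := norm_pos_iff.2 hx0
  have hsub : convexHull ℝ (Set.range v) ⊆ {y | innerSL ℝ x y ≤ r} := by
    refine convexHull_min ?_ (convex_halfSpace_le (innerSL ℝ x).isLinear r)
    rintro _ ⟨i, rfl⟩
    simpa [real_inner_comm] using hx i
  have hmem : (δ / 2 / ‖x‖) • x ∈ Metric.ball (0 : F) δ := by
    rw [mem_ball_zero_iff, norm_smul, Real.norm_of_nonneg (by positivity)]
    field_simp
    linarith
  have := hsub (hδ hmem)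
  simp only [Set.mem_ofPred_eq, innerSL_apply_apply, inner_smul_right,
    real_inner_self_eq_norm_sq] at this
  field_simp at this ⊢
  linarith

/-! ### Genericity of the polar region -/

lemma eq_smul_of_facetFun_eq_zero {ℓ : ι → E →L[ℝ] ℝ} {k i : ι} {u : E} (hu : ℓ k u = 1)
    (h : facetFun ℓ k i = 0) (x : E) : ℓ i x = ℓ i u * ℓ k x := by
  have hx : x - ℓ k x • u ∈ (ℓ k).ker := by simp [hu]
  have := DFunLike.congr_fun h ⟨_, hx⟩
  simp only [facetFun, ContinuousLinearMap.comp_apply, Submodule.subtypeL_apply, map_sub, map_smul,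
    smul_eq_mul, zero_apply] at this
  linarith

variable [DecidableEq ι] {ℓ : ι → E →L[ℝ] ℝ}

/-- A degenerate constraint on a facet would come from two coinciding normals. -/
lemma generic_facet (hinj : Function.Injective ℓ) (k : ι) (u : E) (hu : ℓ k u = 1) :
    Generic (facetFun ℓ k) (facetRhs ℓ k u fun _ => 1) := by
  intro i
  by_contra! ⟨h0, h1⟩
  rcases eq_or_ne i k with rfl | hi
  · simp [facetRhs] at h1
  · simp only [facetRhs, hi, if_false] at h1
    refine hi (hinj (ContinuousLinearMap.ext fun x => ?_))
    rw [eq_smul_of_facetFun_eq_zero hu h0 x]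
    linear_combination (-ℓ k x) * h1

/-- A degenerate constraint on a facet of a facet would come from three collinear normals. -/
lemma generic_facet_facet
    (hcol : ∀ i j k, i ≠ j → i ≠ k → ∀ a b : ℝ, a + b = 1 → ℓ i ≠ a • ℓ j + b • ℓ k)
    (j : ι) (u : E) (hu : ℓ j u = 1) (k : ι) (w : (ℓ j).ker) (hw : facetFun ℓ j k w = 1) :
    Generic (facetFun (facetFun ℓ j) k)
      (facetRhs (facetFun ℓ j) k w (facetRhs ℓ j u fun _ => 1)) := by
  intro i
  by_contra! ⟨h0, h1⟩
  have hjw : ∀ y : (ℓ j).ker, facetFun ℓ j j y = 0 := fun y => y.2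
  have hkj : k ≠ j := by
    rintro rfl
    simp [hjw] at hw
  rcases eq_or_ne i k with rfl | hik
  · simp [facetRhs] at h1
  rcases eq_or_ne i j with rfl | hij
  · simp [facetRhs, hik, hjw] at h1
  have hlin := eq_smul_of_facetFun_eq_zero hw h0
  set b := facetFun ℓ j i w with hb
  simp only [facetRhs, hik, hij, hkj, if_false, one_mul] at h1
  rw [← hb] at h1
  refine hcol i j k hij hik (ℓ i u - b * ℓ k u) b (by linarith) (ContinuousLinearMap.ext fun x => ?_)
  have hx : x - ℓ j x • u ∈ (ℓ j).ker := by simp [hu]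
  have := hlin ⟨_, hx⟩
  simp only [facetFun, ContinuousLinearMap.comp_apply, Submodule.subtypeL_apply, map_sub, map_smul,
    smul_eq_mul] at this
  simp only [add_apply, smul_apply, smul_eq_mul]
  linear_combination this

/-- Each partial derivative of the volume is, near `(1, …, 1)`, a facet volume, and is
differentiable at `(1, …, 1)`. -/
lemma differentiableAt_partial_vol [Fintype ι] [MeasurableSpace E] [BorelSpace E]
    [FiniteDimensional ℝ E] (μ : Measure E) [μ.IsAddHaarMeasure] (hc : Coercive ℓ)
    (hne : ∀ i, ℓ i ≠ 0) (hinj : Function.Injective ℓ)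
    (hcol : ∀ i j k, i ≠ j → i ≠ k → ∀ a b : ℝ, a + b = 1 → ℓ i ≠ a • ℓ j + b • ℓ k) (j : ι) :
    DifferentiableAt ℝ (fun c => fderiv ℝ (vol ℓ μ) c (Pi.single j 1)) (fun _ => 1) := by
  choose u hu using fun k => exists_apply_eq_one (hne k)
  choose ν hν hmp using fun k => exists_slice_measure μ (ℓ k) (u k) (hu k)
  have hev : ∀ᶠ c in 𝓝 (fun _ : ι => (1 : ℝ)), ∀ k,
      Generic (facetFun ℓ k) (facetRhs ℓ k (u k) c) :=
    eventually_all.2 fun k => (differentiable_facetRhs ℓ k (u k)).continuous.continuousAt.eventually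
      (generic_facet hinj k (u k) (hu k)).eventually
  have heq : (fun c => fderiv ℝ (vol ℓ μ) c (Pi.single j 1)) =ᶠ[𝓝 fun _ => 1]
      fun c => vol (facetFun ℓ j) (ν j) (facetRhs ℓ j (u j) c) := by
    filter_upwards [hev] with c hgc
    have := hasFDerivAt_of_partial
      fun k => hasStrictPartial_vol μ hc k (u k) (hu k) (ν k) (hmp k) (hgc k)
    rw [this.fderiv]
    simp [Pi.single_apply]
  refine DifferentiableAt.congr_of_eventuallyEq ?_ heq
  exact DifferentiableAt.comp (f := facetRhs ℓ j (u j)) _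
    (differentiableAt_vol (ν j) (hc.facet j) (generic_facet hinj j (u j) (hu j))
      fun k w hw => generic_facet_facet hcol j (u j) (hu j) k w hw)
    (differentiable_facetRhs ℓ j (u j) _)

end

end Izmestiev

open Izmestiev

/-! ### The kernel of the Izmestiev matrix -/

/-- The Izmestiev matrix `M` of the polytope `P` satisfies `MΦᵀ = 0`:
for every row index `i`, the linear combination `Σ_j M i j • v j` of the vertices of `P`
vanishes. -/
theorem stmt_6 {d n : ℕ}
    (v : Fin n → EuclideanSpace ℝ (Fin d))
    (P : Set (EuclideanSpace ℝ (Fin d)))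
    (hP : P = convexHull ℝ (Set.range v))
    (hfull : affineSpan ℝ P = ⊤)
    (hinj : Function.Injective v)
    (hvert : Set.range v = Set.extremePoints ℝ P)
    (h0 : (0 : EuclideanSpace ℝ (Fin d)) ∈ interior P)
    (f : (Fin n → ℝ) → ℝ)
    (hf : ∀ c, f c =
      (volume {x : EuclideanSpace ℝ (Fin d) | ∀ i, ⟪x, v i⟫ ≤ c i}).toReal)
    (M : Matrix (Fin n) (Fin n) ℝ)
    (hM : ∀ i j, M i j =
      fderiv ℝ (fun c => fderiv ℝ f c (Pi.single j 1)) (fun _ => 1) (Pi.single i 1)) :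
    ∀ i, ∑ j, M i j • v j = (0 : EuclideanSpace ℝ (Fin d)) := by
  intro i
  -- in dimension `0` the only vertex is `0`, and the normals below would vanish
  rcases subsingleton_or_nontrivial (EuclideanSpace ℝ (Fin d)) with hs | hs
  · exact Subsingleton.elim _ _
  set ℓ : Fin n → EuclideanSpace ℝ (Fin d) →L[ℝ] ℝ := fun i => innerSL ℝ (v i) with hℓ
  have hfv : f = vol ℓ volume := by
    ext c
    rw [hf, vol, measureReal_def]
    congr 2
    ext x
    exact forall_congr' fun i => by simp [hℓ, real_inner_comm]
  have hext : ∀ i, v i ∈ P.extremePoints ℝ := fun i => hvert ▸ Set.mem_range_self i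
  have hker : Function.Injective (innerSL ℝ (E := EuclideanSpace ℝ (Fin d))) := by
    intro x y hxy
    refine ext_inner_right ℝ fun z => ?_
    simpa using DFunLike.congr_fun hxy z
  have hdiff : ∀ j, DifferentiableAt ℝ (fun c => fderiv ℝ f c (Pi.single j 1)) (fun _ => 1) := by
    intro j
    rw [hfv]
    refine differentiableAt_partial_vol volume (coercive_inner (hP ▸ h0)) (fun i hi => ?_)
      (hker.comp hinj) (fun i j k hij hik a b hab h => ?_) j
    · exact extreme_ne_zero h0 (hext i) (hker (by simpa [hℓ] using hi))
    · refine not_collinear_of_extreme hinj hext i j k hij hik a b hab (hker ?_)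
      simpa [hℓ] using h
  refine ext_inner_right ℝ fun t => ?_
  rw [inner_zero_left, sum_inner]
  -- the derivative of `f` along the translation direction `(⟨t, v j⟩)ⱼ`, expanded in partials
  have hz : (fun c => ∑ j, ℓ j t • fderiv ℝ f c (Pi.single j 1)) = fun _ => 0 := by
    ext c
    rw [← fderiv_vol_translate (ℓ := ℓ) volume c t, ← hfv]
    conv_rhs => rw [← Finset.univ_sum_single (fun i => ℓ i t), map_sum]
    refine Finset.sum_congr rfl fun j _ => ?_
    rw [← map_smul, ← Pi.single_smul, smul_eq_mul, mul_one]
  have hd := HasFDerivAt.fun_sum (u := Finset.univ)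
    fun j _ => (hdiff j).hasFDerivAt.const_smul (ℓ j t)
  have h3 := hd.fderiv
  have h4 : ∑ j, ℓ j t • fderiv ℝ (fun c => fderiv ℝ f c (Pi.single j 1)) (fun _ => 1) = 0 := by
    rw [← h3]
    refine Eq.trans (congrArg (fun g => fderiv ℝ g fun _ => 1) hz) ?_
    simp
  have h5 := DFunLike.congr_fun h4 (Pi.single i 1)
  simp only [sum_apply, smul_apply, ← hM, zero_apply, smul_eq_mul] at h5
  rw [← h5]
  refine Finset.sum_congr rfl fun j _ => ?_
  rw [real_inner_smul_left, mul_comm]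
  simp [hℓ]
end

section
/- For every linear symmetry T of P, the induced vertex permutation σ_T preserves the Izmestiev matrix: M_{σ_T(i) σ_T(j)} = M_{ij} for all i, j ∈ {1,…,n}. -/
/-! The adjoint `S` of `T` satisfies `⟪S x, v i⟫ = ⟪x, v (σ i)⟫`, so `P°(c)` is the preimage under `S`
of `P°(c ∘ σ)`. As `T` maps the body `P`, of positive finite volume, onto itself, `|det S| = |det T| = 1`,
and so `f (c ∘ σ) = f c` for every `c`. The map `c ↦ c ∘ σ` is a continuous linear
equivalence, fixes `(1, …, 1)` and sends the basis vector `e (σ i)` to `e i`; the chain rule,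
applied twice, gives the claim. For precomposition with an equivalence the chain rule for
`fderiv` needs no differentiability, so the smoothness of the volume function plays no role. -/


open MeasureTheory
open scoped RealInnerProductSpace

theorem abs_det_eq_one_of_image_eq {d : ℕ} {P : Set (EuclideanSpace ℝ (Fin d))}
    (hc : IsCompact P) (hi : (interior P).Nonempty)
    (A : EuclideanSpace ℝ (Fin d) →ₗ[ℝ] EuclideanSpace ℝ (Fin d)) (hA : A '' P = P) :
    |LinearMap.det A| = 1 := by
  have h := Measure.addHaar_image_linearMap volume A P
  rw [hA] at h
  have hpos : 0 < (volume P).toReal :=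
    ENNReal.toReal_pos (Measure.measure_pos_of_nonempty_interior volume hi).ne' hc.measure_lt_top.ne
  have h' := congrArg ENNReal.toReal h
  rw [ENNReal.toReal_mul, ENNReal.toReal_ofReal (abs_nonneg _)] at h'
  exact mul_right_cancel₀ hpos.ne' (by linarith)

/-- Every linear symmetry `T` of `P`, via its induced vertex
permutation `σ_T`, preserves the entries of the Izmestiev matrix `M`:
`M (σ_T i) (σ_T j) = M i j` for all `i, j`. -/
theorem stmt_9 {d n : ℕ}
    (v : Fin n → EuclideanSpace ℝ (Fin d))
    (P : Set (EuclideanSpace ℝ (Fin d)))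
    (hP : P = convexHull ℝ (Set.range v))
    (hfull : affineSpan ℝ P = ⊤)
    (hinj : Function.Injective v)
    (hvert : Set.range v = Set.extremePoints ℝ P)
    (h0 : (0 : EuclideanSpace ℝ (Fin d)) ∈ interior P)
    (f : (Fin n → ℝ) → ℝ)
    (hf : ∀ c, f c =
      (volume {x : EuclideanSpace ℝ (Fin d) | ∀ i, ⟪x, v i⟫ ≤ c i}).toReal)
    (M : Matrix (Fin n) (Fin n) ℝ)
    (hM : ∀ i j, M i j =
      fderiv ℝ (fun c => fderiv ℝ f c (Pi.single j 1)) (fun _ => 1) (Pi.single i 1))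
    (T : EuclideanSpace ℝ (Fin d) ≃ₗ[ℝ] EuclideanSpace ℝ (Fin d))
    (hT : ⇑T '' P = P)
    (σ : Equiv.Perm (Fin n))
    (hσ : ∀ i, T (v i) = v (σ i)) :
    ∀ i j, M (σ i) (σ j) = M i j := by
  have hcomp : IsCompact P := hP ▸ (Set.finite_range v).isCompact_convexHull ℝ
  have hdet := abs_det_eq_one_of_image_eq hcomp ⟨0, h0⟩ T.toLinearMap hT
  set S := LinearMap.adjoint T.toLinearMap with hS
  have hdetS : |LinearMap.det S| = 1 := by
    let b := EuclideanSpace.basisFun (Fin d) ℝ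
    rw [hS, ← LinearMap.det_toMatrix b.toBasis, LinearMap.toMatrix_adjoint b b,
      Matrix.det_conjTranspose, LinearMap.det_toMatrix]
    simpa using hdet
  have hS0 : LinearMap.det S ≠ 0 := by
    intro h
    simp [h] at hdetS
  let L : (Fin n → ℝ) ≃L[ℝ] (Fin n → ℝ) :=
    (LinearEquiv.funCongrLeft ℝ ℝ σ).toContinuousLinearEquiv
  have hL : ∀ c i, L c i = c (σ i) := fun _ _ => rfl
  have hLe : ∀ i, L (Pi.single (σ i) 1) = Pi.single i 1 := by
    intro i
    ext k
    simp [hL, Pi.single_apply]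
  have hL1 : L (fun _ => 1) = fun _ => 1 := rfl
  have hfL : f ∘ L = f := by
    funext c
    have hset : {x : EuclideanSpace ℝ (Fin d) | ∀ i, ⟪x, v i⟫ ≤ c i} =
        S ⁻¹' {x | ∀ i, ⟪x, v i⟫ ≤ L c i} := by
      ext x
      simp only [Set.mem_ofPred_eq, Set.mem_preimage, hL, hS, LinearMap.adjoint_inner_left,
        LinearEquiv.coe_coe, hσ]
      exact (σ.forall_congr_right (q := fun i => ⟪x, v i⟫ ≤ c i)).symm
    rw [Function.comp_apply, hf, hf c, hset, Measure.addHaar_preimage_linearMap volume hS0,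
      abs_inv, hdetS]
    simp
  have h1 : ∀ c w, fderiv ℝ f c w = fderiv ℝ f (L c) (L w) := by
    intro c w
    conv_lhs => rw [← hfL, L.comp_right_fderiv]
    rfl
  intro i j
  have hg : (fun c => fderiv ℝ f c (Pi.single (σ j) 1)) =
      (fun c => fderiv ℝ f c (Pi.single j 1)) ∘ L := by
    funext c
    rw [h1, hLe]
    rfl
  rw [hM, hM, hg, L.comp_right_fderiv, hL1, ContinuousLinearMap.comp_apply]
  exact congrArg _ (hLe i)
end
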